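/- Let p ∈ [1, ∞), ε ∈ (0, 1), and B ≥ 1. Let Φ be a Φ-function such that the function t ↦ Φ(t)t^{-p} is increasing on (0, ∞) and there is q ∈ [p, ∞) such that t ↦ Φ(t)t^{-q} is decreasing on (0, ∞). Then there is a constant C depending only on Φ and ε such that: for every N-dimensional subspace X_N of C(Ω) satisfying ‖f‖_∞ ≤ √(BN)·‖f‖_{L²(μ)} for all f ∈ X_N, there exist a natural number m ≤ C·Φ((BN)^{1/min{p,2}})·(log₂ 2BN)³ and points x₁, …, x_m ∈ Ω such that (1−ε)‖f‖_Φ ≤ ‖f‖_{Φ,x} ≤ (1+ε)‖f‖_Φ for all f ∈ X_N. -/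

import Mathlib

open MeasureTheory

noncomputable section

/-- The sup-norm (uniform norm) `‖f‖_∞ = sup_{x ∈ Ω} |f x|` of a real-valued function. -/
def supNorm {Ω : Type*} (f : Ω → ℝ) : ℝ := ⨆ x, |f x|

/-- The Luxemburg functional `‖f‖_Φ = inf {λ > 0 : ∫ Φ(|f|/λ) dμ ≤ 1}`. -/
def luxNorm {Ω : Type*} [MeasurableSpace Ω] (μ : Measure Ω) (Φ : ℝ → ℝ) (f : Ω → ℝ) : ℝ :=
  sInf {lam : ℝ | 0 < lam ∧ ∫ x, Φ (|f x| / lam) ∂μ ≤ 1}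

/-- The discrete Luxemburg functional `‖f‖_{Φ,x}` with respect to the uniform discrete
probability measure `(1/m) ∑_{j=1}^m δ_{x_j}`. -/
def discLuxNorm {Ω : Type*} (Φ : ℝ → ℝ) {m : ℕ} (x : Fin m → Ω) (f : Ω → ℝ) : ℝ :=
  sInf {lam : ℝ | 0 < lam ∧ (∑ j, Φ (|f (x j)| / lam)) / (m : ℝ) ≤ 1}

/-- The weighted discrete Luxemburg functional `‖f‖_{Φ,x,λ}` with respect to the discrete
probability measure `∑_{j=1}^m λ_j δ_{x_j}`. -/
def wDiscLuxNorm {Ω : Type*} (Φ : ℝ → ℝ) {m : ℕ} (x : Fin m → Ω) (w : Fin m → ℝ)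
    (f : Ω → ℝ) : ℝ :=
  sInf {lam : ℝ | 0 < lam ∧ (∑ j, w j * Φ (|f (x j)| / lam)) ≤ 1}

/-- `Φ : [0,∞) → [0,∞)` is a Φ-prefunction: increasing, `Φ(0) = 0`, `Φ(0+) = 0`,
`Φ(∞) = ∞` (stated for a function on `ℝ`, with the relevant conditions on `[0,∞)`). -/
structure IsPhiPrefun (Φ : ℝ → ℝ) : Prop where
  mono : MonotoneOn Φ (Set.Ici 0)
  map_zero : Φ 0 = 0
  nonneg : ∀ t : ℝ, 0 ≤ t → 0 ≤ Φ t
  tendsto_zero : Filter.Tendsto Φ (nhdsWithin 0 (Set.Ioi 0)) (nhds 0)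
  tendsto_atTop : Filter.Tendsto Φ Filter.atTop Filter.atTop

/-- `Φ ∈ (aInc)_p` with constant `a`: `t ↦ Φ(t) t^{-p}` is almost increasing on `(0,∞)`. -/
def AIncP (Φ : ℝ → ℝ) (p a : ℝ) : Prop :=
  ∀ s t : ℝ, 0 < s → s < t → Φ s / s ^ p ≤ a * (Φ t / t ^ p)

/-- `Φ ∈ (Inc)_p` : `t ↦ Φ(t) t^{-p}` is increasing on `(0,∞)`. -/
def IncP (Φ : ℝ → ℝ) (p : ℝ) : Prop :=
  ∀ s t : ℝ, 0 < s → s < t → Φ s / s ^ p ≤ Φ t / t ^ p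

/-- `Φ ∈ (Dec)_q` : `t ↦ Φ(t) t^{-q}` is decreasing on `(0,∞)`. -/
def DecQ (Φ : ℝ → ℝ) (q : ℝ) : Prop :=
  ∀ s t : ℝ, 0 < s → s < t → Φ t / t ^ q ≤ Φ s / s ^ q

/-- `Φ ∈ (aDec)_q` with constant `b`: `t ↦ Φ(t) t^{-q}` is almost decreasing on `(0,∞)`. -/
def ADecQ (Φ : ℝ → ℝ) (q b : ℝ) : Prop :=
  ∀ s t : ℝ, 0 < s → s < t → Φ t / t ^ q ≤ b * (Φ s / s ^ q)

/-- `t ↦ Φ(t) t^{-p}` is almost increasing with constant `a` on `(t_*, ∞)`. -/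
def AIncPOn (Φ : ℝ → ℝ) (p a tstar : ℝ) : Prop :=
  ∀ s t : ℝ, tstar < s → s < t → Φ s / s ^ p ≤ a * (Φ t / t ^ p)

/-- `t ↦ Φ(t) t^{-q}` is almost decreasing with constant `b` on `(t_*, ∞)`. -/
def ADecQOn (Φ : ℝ → ℝ) (q b tstar : ℝ) : Prop :=
  ∀ s t : ℝ, tstar < s → s < t → Φ t / t ^ q ≤ b * (Φ s / s ^ q)

/-- Entropy numbers `e_n(F, d)` of a set `F` with respect to a distance-like function `dd`:
the infimum of `ε > 0` such that `F` can be covered by `2^{2^n}` (one, for `n = 0`)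
`ε`-balls centered in `F`. -/
def entropyNumD {X : Type*} (dd : X → X → ℝ) (F : Set X) (n : ℕ) : ℝ :=
  sInf {ε : ℝ | 0 < ε ∧ ∃ T : Finset X, ↑T ⊆ F ∧
    T.card ≤ (if n = 0 then 1 else 2 ^ 2 ^ n) ∧ ∀ f ∈ F, ∃ g ∈ T, dd f g < ε}

/-- Sampling numbers `ϱ_m(F, ‖·‖)`: recovery by linear methods from samples at `m` points. -/
def sampNum {Ω : Type*} (nrm : (Ω → ℝ) → ℝ) (F : Set (Ω → ℝ)) (m : ℕ) : ℝ :=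
  sInf {r : ℝ | ∃ (x : Fin m → Ω) (T : (Fin m → ℝ) →ₗ[ℝ] (Ω → ℝ)),
    r = ⨆ f ∈ F, nrm (fun y => f y - T (fun j => f (x j)) y)}

/-- Modified sampling numbers `ϱ*_m(F, ‖·‖)`: recovery by arbitrary methods mapping into a
subspace of dimension at most `m`, from samples at `m` points. -/
def sampNumStar {Ω : Type*} (nrm : (Ω → ℝ) → ℝ) (F : Set (Ω → ℝ)) (m : ℕ) : ℝ :=
  sInf {r : ℝ | ∃ (x : Fin m → Ω) (Y : Submodule ℝ (Ω → ℝ)), Module.finrank ℝ Y ≤ m ∧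
    ∃ T : (Fin m → ℝ) → Ω → ℝ, (∀ v, T v ∈ Y) ∧
    r = ⨆ f ∈ F, nrm (fun y => f y - T (fun j => f (x j)) y)}

/-- Kolmogorov width `d_N(F, ‖·‖_∞)` : infimum over `N`-dimensional subspaces of `C(Ω)` of the
worst-case best approximation error in the uniform norm. -/
def kolWidth {Ω : Type*} [TopologicalSpace Ω] (F : Set (Ω → ℝ)) (N : ℕ) : ℝ :=
  sInf {r : ℝ | ∃ X : Submodule ℝ (Ω → ℝ), Module.finrank ℝ X = N ∧
    (∀ u ∈ X, Continuous u) ∧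
    r = ⨆ f ∈ F, sInf ((fun u => supNorm (fun y => f y - u y)) '' (X : Set (Ω → ℝ)))}

end

/-!
The Luxemburg functional is governed by the modular `∫ Φ(|f|)`: since `Φ` grows at least linearly
and at most polynomially, it suffices to find points whose empirical means reproduce the modular up
to `ε` on the ball `∫ Φ(|f|) ≤ 1`. In an orthonormal basis of the subspace every function is
`f y = ⟪u y, c⟫` with `‖u y‖² ≤ K = BN`.

By Hoeffding's inequality, polynomially many (in `K`) random points work. Half of the points are
then discarded repeatedly: grouping the points into pairs and keeping one random point of each pair
changes the empirical means by Rademacher sums, which chaining bounds uniformly over the ball. The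
covering numbers in the sup norm over the sample that chaining needs come from the dual Sudakov
inequality: separated points are centres of disjoint translates of a symmetric slab of large
Gaussian measure, and by the Cameron–Martin formula a small translation does not shrink the measure
much. The local estimate `(Φ|s| - Φ|t|)² ≲ |s - t|^p (Φ|s| + Φ|t|)`, with `p ≤ 2`, makes all scales
contribute equally, so the halvings can continue down to `Φ(K^(1/p)) log³ K` points.
-/

open Real
open scoped Finset BigOperators RealInnerProductSpace

/-! ### Rademacher sums -/

section Rademacher

variable {ι : Type*} [Fintype ι]

/-- The Rademacher sign of a boolean, so that a uniformly random `σ : ι → Bool` encodes a family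
of independent Rademacher variables. -/
def boolSign (b : Bool) : ℝ := if b then 1 else -1

theorem boolSign_sq (b : Bool) : boolSign b ^ 2 = 1 := by cases b <;> simp [boolSign]

variable [DecidableEq ι]

theorem sum_exp_rademacher_le (a : ι → ℝ) (l : ℝ) :
    ∑ σ : ι → Bool, exp (l * ∑ i, boolSign (σ i) * a i)
      ≤ 2 ^ Fintype.card ι * exp (l ^ 2 * (∑ i, a i ^ 2) / 2) := by
  have factor_le (i : ι) :
      ∑ b : Bool, exp (l * (boolSign b * a i)) ≤ 2 * exp (l ^ 2 * a i ^ 2 / 2) := by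
    have h := cosh_le_exp_half_sq (l * a i)
    rw [cosh_eq, mul_pow] at h
    simp only [Fintype.sum_bool, boolSign, if_true, one_mul, Bool.false_eq_true, if_false,
      neg_one_mul, mul_neg]
    linarith
  calc ∑ σ : ι → Bool, exp (l * ∑ i, boolSign (σ i) * a i)
      = ∑ σ : ι → Bool, ∏ i, exp (l * (boolSign (σ i) * a i)) := by
        simp_rw [← exp_sum, ← Finset.mul_sum]
    _ = ∏ i, ∑ b : Bool, exp (l * (boolSign b * a i)) := by
        rw [Finset.prod_univ_sum, Fintype.piFinset_univ]
    _ ≤ ∏ i, (2 * exp (l ^ 2 * a i ^ 2 / 2)) :=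
        Finset.prod_le_prod (fun _ _ => by positivity) fun i _ => factor_le i
    _ = 2 ^ Fintype.card ι * exp (l ^ 2 * (∑ i, a i ^ 2) / 2) := by
        rw [Finset.prod_mul_distrib, ← exp_sum, Finset.prod_const, Finset.card_univ,
          Finset.mul_sum, Finset.sum_div]

theorem sum_cosh_rademacher_le (a : ι → ℝ) (l : ℝ) :
    ∑ σ : ι → Bool, cosh (l * ∑ i, boolSign (σ i) * a i)
      ≤ 2 ^ Fintype.card ι * exp (l ^ 2 * (∑ i, a i ^ 2) / 2) := by
  have hpos := sum_exp_rademacher_le a l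
  have hneg := sum_exp_rademacher_le a (-l)
  simp only [neg_sq, neg_mul] at hneg
  simp only [cosh_eq, ← Finset.sum_div, Finset.sum_add_distrib]
  linarith

open Classical in
theorem card_lt_abs_rademacher_le (a : ι → ℝ) {u b : ℝ} (hu : 0 ≤ u) (hb : 0 ≤ b)
    (hab : ∑ i, a i ^ 2 ≤ b ^ 2) :
    (#{σ : ι → Bool | u * b < |∑ i, boolSign (σ i) * a i|} : ℝ)
      ≤ 2 ^ Fintype.card ι * (2 * exp (-(u ^ 2 / 2))) := by
  rcases hb.eq_or_lt with rfl | hb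
  · have ha : ∀ i, a i = 0 := fun i => by
      have h := (Finset.single_le_sum (f := fun i => a i ^ 2) (fun i _ => sq_nonneg _)
        (Finset.mem_univ i)).trans hab
      nlinarith
    simp only [ha, mul_zero, Finset.sum_const_zero, abs_zero, lt_irrefl, Finset.filter_false,
      Finset.card_empty, Nat.cast_zero]
    positivity
  · set S : Finset (ι → Bool) := {σ | u * b < |∑ i, boolSign (σ i) * a i|}
    have cosh_le (σ) (hσ : σ ∈ S) :
        exp (u ^ 2) / 2 ≤ cosh (u / b * ∑ i, boolSign (σ i) * a i) := by
      have hσ : u * b < |∑ i, boolSign (σ i) * a i| := (Finset.mem_filter.1 hσ).2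
      have hle : |u ^ 2| ≤ |u / b * ∑ i, boolSign (σ i) * a i| := by
        rw [abs_mul, abs_of_nonneg (div_nonneg hu hb.le), abs_of_nonneg (sq_nonneg u)]
        calc u ^ 2 = u / b * (u * b) := by field_simp
          _ ≤ _ := by gcongr
      have hcosh := cosh_le_cosh.2 hle
      rw [cosh_eq (u ^ 2)] at hcosh
      linarith [exp_pos (-u ^ 2)]
    have markov : (#S : ℝ) * (exp (u ^ 2) / 2) ≤ 2 ^ Fintype.card ι * exp (u ^ 2 / 2) :=
      calc (#S : ℝ) * (exp (u ^ 2) / 2)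
          ≤ ∑ σ ∈ S, cosh (u / b * ∑ i, boolSign (σ i) * a i) := by
            rw [← nsmul_eq_mul]; exact Finset.card_nsmul_le_sum _ _ _ cosh_le
        _ ≤ ∑ σ : ι → Bool, cosh (u / b * ∑ i, boolSign (σ i) * a i) :=
            Finset.sum_le_sum_of_subset_of_nonneg (Finset.subset_univ _)
              fun _ _ _ => (cosh_pos _).le
        _ ≤ 2 ^ Fintype.card ι * exp ((u / b) ^ 2 * (∑ i, a i ^ 2) / 2) :=
            sum_cosh_rademacher_le a _
        _ ≤ 2 ^ Fintype.card ι * exp ((u / b) ^ 2 * b ^ 2 / 2) := by gcongr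
        _ = 2 ^ Fintype.card ι * exp (u ^ 2 / 2) := by
          rw [div_pow, div_mul_cancel₀ _ (by positivity)]
    have hexp : exp (u ^ 2) = exp (u ^ 2 / 2) * exp (u ^ 2 / 2) := by rw [← exp_add, add_halves]
    rw [exp_neg, ← div_eq_mul_inv, mul_div_assoc', le_div_iff₀ (exp_pos _)]
    rw [hexp] at markov
    nlinarith [exp_pos (u ^ 2 / 2)]

end Rademacher

/-! ### Chaining and halving -/

/-- A class of functions `φ c` on `V`, indexed by `c ∈ F`, prepared for a chaining argument: at
scale `k` the points related by `rel k` are close, in the self-normalized sense of `sq_sub_le`, and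
the `rel k`-ball of each `g ∈ F` has a `rel (k + 1)`-net of at most `exp (entropy k)` points. -/
structure ChainingFamily (V E : Type*) where
  F : Set E
  φ : E → V → ℝ
  rel : ℕ → E → E → Prop
  width : ℕ → ℝ
  entropy : ℕ → ℝ
  root : E
  width_nonneg : ∀ k, 0 ≤ width k
  root_mem : root ∈ F
  φ_root : ∀ v, φ root v = 0
  rel_root : ∀ c ∈ F, rel 0 c root
  sq_sub_le : ∀ k, ∀ c ∈ F, ∀ c' ∈ F, rel k c c' →
    ∀ v, (φ c v - φ c' v) ^ 2 ≤ width k ^ 2 * (φ c v + φ c' v)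
  exists_net : ∀ k, ∀ g ∈ F, ∃ T : Finset E, (T : Set E) ⊆ F ∧ (#T : ℝ) ≤ exp (entropy k) ∧
    (∀ h ∈ T, rel k h g) ∧ ∀ f ∈ F, rel k f g → ∃ h ∈ T, rel (k + 1) f h

namespace ChainingFamily

variable {V E ι : Type*} [Fintype ι] (D : ChainingFamily V E)

/-- The deviation, in units of the standard deviation, allowed to the links from level `k` to level
`k + 1` of the chain: a union bound over these links fails with probability `exp (-(k + 4))`. -/
noncomputable def threshold (k : ℕ) : ℝ :=
  √(2 * (∑ i ∈ Finset.range (k + 1), D.entropy i) + 2 * (k + 4))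

/-- The bound on the normalized signed sums of `n` terms obtained by chaining down to level `L` and
estimating the remainder trivially. -/
noncomputable def chainBound (L n : ℕ) : ℝ :=
  (∑ k ∈ Finset.range L, D.threshold k * D.width k) + √n * D.width L

/-- The symmetrized sum `∑ i, ± (φ c (x (i, true)) - φ c (x (i, false)))`. -/
def signedSum (x : ι × Bool → V) (σ : ι → Bool) (c : E) : ℝ :=
  ∑ i, boolSign (σ i) * (D.φ c (x (i, true)) - D.φ c (x (i, false)))

theorem signedSum_sub_signedSum (x : ι × Bool → V) (σ : ι → Bool) (c c' : E) :
    D.signedSum x σ c - D.signedSum x σ c' =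
      ∑ i, boolSign (σ i) * ((D.φ c (x (i, true)) - D.φ c (x (i, false))) -
        (D.φ c' (x (i, true)) - D.φ c' (x (i, false)))) := by
  simp only [signedSum, ← Finset.sum_sub_distrib, mul_sub]

open Classical in
/-- The sign patterns for which the link `l`, stored as (coarse point, fine point), deviates more
than the threshold of level `k` allows. -/
noncomputable def badSigns (x : ι × Bool → V) (k : ℕ) (l : E × E) : Finset (ι → Bool) :=
  {σ | D.threshold k * (4 * √(Fintype.card ι) * D.width k)
    < |D.signedSum x σ l.2 - D.signedSum x σ l.1|}

variable {D} {x : ι × Bool → V}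

theorem sum_sq_increment_le (hx : ∀ c ∈ D.F, 𝔼 z, D.φ c (x z) ≤ 2) {k : ℕ} {c c' : E}
    (hc : c ∈ D.F) (hc' : c' ∈ D.F) (hr : D.rel k c c') :
    ∑ i, ((D.φ c (x (i, true)) - D.φ c (x (i, false))) -
        (D.φ c' (x (i, true)) - D.φ c' (x (i, false)))) ^ 2
      ≤ (4 * √(Fintype.card ι) * D.width k) ^ 2 := by
  have sum_le (c) (hc : c ∈ D.F) : ∑ z, D.φ c (x z) ≤ 4 * Fintype.card ι := by
    rw [← Fintype.card_mul_expect, Fintype.card_prod, Fintype.card_bool]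
    push_cast
    nlinarith [hx c hc, (Nat.cast_nonneg (Fintype.card ι) : (0 : ℝ) ≤ Fintype.card ι)]
  calc _ ≤ ∑ i, ∑ b : Bool, 2 * (D.width k ^ 2 * (D.φ c (x (i, b)) + D.φ c' (x (i, b)))) := by
        refine Finset.sum_le_sum fun i _ => ?_
        have h (b : Bool) := D.sq_sub_le k c hc c' hc' hr (x (i, b))
        simp only [Fintype.sum_bool]
        nlinarith [h true, h false, sq_nonneg ((D.φ c (x (i, true)) - D.φ c' (x (i, true))) +
          (D.φ c (x (i, false)) - D.φ c' (x (i, false))))]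
    _ = 2 * (D.width k ^ 2 * (∑ z, D.φ c (x z) + ∑ z, D.φ c' (x z))) := by
        simp only [Fintype.sum_prod_type, ← Finset.mul_sum, ← Finset.sum_add_distrib]
    _ ≤ 2 * (D.width k ^ 2 * (4 * Fintype.card ι + 4 * Fintype.card ι)) := by
        gcongr
        exacts [sum_le c hc, sum_le c' hc']
    _ = _ := by
        rw [mul_pow, mul_pow, sq_sqrt (Nat.cast_nonneg _)]
        ring

theorem abs_signedSum_sub_le (hx : ∀ c ∈ D.F, 𝔼 z, D.φ c (x z) ≤ 2) {k : ℕ} {c c' : E}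
    (hc : c ∈ D.F) (hc' : c' ∈ D.F) (hr : D.rel k c c') (σ : ι → Bool) :
    |D.signedSum x σ c - D.signedSum x σ c'|
      ≤ √(Fintype.card ι) * (4 * √(Fintype.card ι) * D.width k) := by
  have := D.width_nonneg k
  rw [signedSum_sub_signedSum]
  refine abs_le_of_sq_le_sq ((Finset.sum_mul_sq_le_sq_mul_sq _ _ _).trans ?_) (by positivity)
  simp only [boolSign_sq, Finset.sum_const, Finset.card_univ, nsmul_eq_mul, mul_one]
  rw [mul_pow √_, sq_sqrt (Nat.cast_nonneg _)]
  gcongr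
  exact sum_sq_increment_le hx hc hc' hr

theorem sum_entropy_add_le_threshold_sq (k : ℕ) :
    (∑ i ∈ Finset.range (k + 1), D.entropy i) + (k + 4) ≤ D.threshold k ^ 2 / 2 := by
  have := le_max_left (2 * (∑ i ∈ Finset.range (k + 1), D.entropy i) + 2 * (k + 4)) 0
  rw [← sq_sqrt'] at this
  rw [threshold]
  linarith

theorem card_badSigns_le (hx : ∀ c ∈ D.F, 𝔼 z, D.φ c (x z) ≤ 2) {k : ℕ} {l : E × E}
    (hl₁ : l.1 ∈ D.F) (hl₂ : l.2 ∈ D.F) (hr : D.rel k l.2 l.1) :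
    (#(D.badSigns x k l) : ℝ) ≤ 2 ^ Fintype.card ι *
      (2 * exp (-((∑ i ∈ Finset.range (k + 1), D.entropy i) + (k + 4)))) := by
  classical
  have := D.width_nonneg k
  simp only [badSigns, signedSum_sub_signedSum]
  refine (card_lt_abs_rademacher_le _ (sqrt_nonneg _) (by positivity)
    (sum_sq_increment_le hx hl₂ hl₁ hr)).trans ?_
  gcongr
  exact sum_entropy_add_le_threshold_sq k

/-- A global net of level `L`, of the size given by the product of the local entropy bounds. -/
def IsLevelNet (D : ChainingFamily V E) (L : ℕ) (T : Finset E) : Prop :=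
  (T : Set E) ⊆ D.F ∧ (#T : ℝ) ≤ exp (∑ i ∈ Finset.range L, D.entropy i) ∧
    ∀ f ∈ D.F, ∃ h ∈ T, D.rel L f h

theorem isLevelNet_zero : D.IsLevelNet 0 {D.root} :=
  ⟨by simpa using D.root_mem, by simp, fun f hf => ⟨D.root, by simp, D.rel_root f hf⟩⟩

theorem IsLevelNet.exists_links [DecidableEq E] {L : ℕ} {T : Finset E} (hT : D.IsLevelNet L T) :
    ∃ P : Finset (E × E), (#P : ℝ) ≤ exp (∑ i ∈ Finset.range (L + 1), D.entropy i) ∧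
      (∀ l ∈ P, l.1 ∈ T ∧ D.rel L l.2 l.1) ∧ D.IsLevelNet (L + 1) (P.image Prod.snd) := by
  obtain ⟨hTF, hTcard, hTnet⟩ := hT
  choose! net net_subset net_card net_rel net_cover using D.exists_net L
  have hcard : (#(T.sigma net) : ℝ) ≤ exp (∑ i ∈ Finset.range (L + 1), D.entropy i) :=
    calc (#(T.sigma net) : ℝ) = ∑ g ∈ T, (#(net g) : ℝ) := by simp [Finset.card_sigma]
      _ ≤ ∑ _g ∈ T, exp (D.entropy L) := Finset.sum_le_sum fun g hg => net_card g (hTF hg)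
      _ ≤ exp (∑ i ∈ Finset.range L, D.entropy i) * exp (D.entropy L) := by
          rw [Finset.sum_const, nsmul_eq_mul]; gcongr
      _ = exp (∑ i ∈ Finset.range (L + 1), D.entropy i) := by rw [← exp_add, Finset.sum_range_succ]
  set P : Finset (E × E) := (T.sigma net).image fun z => (z.1, z.2) with hP
  have mem_P {l : E × E} : l ∈ P ↔ l.1 ∈ T ∧ l.2 ∈ net l.1 := by
    simp [hP, Prod.ext_iff, and_assoc]
  have hPcard : (#P : ℝ) ≤ exp (∑ i ∈ Finset.range (L + 1), D.entropy i) :=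
    (Nat.cast_le.2 Finset.card_image_le).trans hcard
  refine ⟨P, hPcard, fun l hl => ?_, ?_, (Nat.cast_le.2 Finset.card_image_le).trans hPcard, ?_⟩
  · obtain ⟨hg, hh⟩ := mem_P.1 hl
    exact ⟨hg, net_rel _ (hTF hg) _ hh⟩
  · intro c hc
    obtain ⟨l, hl, rfl⟩ := Finset.mem_image.1 hc
    obtain ⟨hg, hh⟩ := mem_P.1 hl
    exact net_subset _ (hTF hg) hh
  · intro f hf
    obtain ⟨g, hg, hfg⟩ := hTnet f hf
    obtain ⟨h, hh, hfh⟩ := net_cover g (hTF hg) f hf hfg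
    exact ⟨h, Finset.mem_image.2 ⟨(g, h), mem_P.2 ⟨hg, hh⟩, rfl⟩, hfh⟩

theorem two_mul_exp_neg_add_four_le (L : ℕ) : 2 * exp (-((L : ℝ) + 4)) ≤ (1 / 2) ^ (L + 3) := by
  have hexp : exp (-1) ≤ 1 / 2 := by
    rw [exp_neg, one_div]
    exact inv_anti₀ two_pos (by linarith [add_one_le_exp (1 : ℝ)])
  calc 2 * exp (-((L : ℝ) + 4)) = 2 * exp (-1) ^ (L + 4) := by
        rw [← exp_nat_mul]; push_cast; ring_nf
    _ ≤ 2 * (1 / 2) ^ (L + 4) := by gcongr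
    _ = (1 / 2) ^ (L + 3) := by ring

theorem card_biUnion_badSigns_le [DecidableEq (ι → Bool)]
    (hx : ∀ c ∈ D.F, 𝔼 z, D.φ c (x z) ≤ 2) {L : ℕ} {P : Finset (E × E)}
    (hPcard : (#P : ℝ) ≤ exp (∑ i ∈ Finset.range (L + 1), D.entropy i))
    (hP : ∀ l ∈ P, l.1 ∈ D.F ∧ l.2 ∈ D.F ∧ D.rel L l.2 l.1) :
    (#(P.biUnion (D.badSigns x L)) : ℝ) ≤ 2 ^ Fintype.card ι * (1 / 2) ^ (L + 3) := by
  set A := ∑ i ∈ Finset.range (L + 1), D.entropy i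
  calc (#(P.biUnion (D.badSigns x L)) : ℝ)
      ≤ ∑ l ∈ P, (#(D.badSigns x L l) : ℝ) := mod_cast Finset.card_biUnion_le
    _ ≤ ∑ l ∈ P, 2 ^ Fintype.card ι * (2 * exp (-(A + (L + 4)))) :=
        Finset.sum_le_sum fun l hl => card_badSigns_le hx (hP l hl).1 (hP l hl).2.1 (hP l hl).2.2
    _ ≤ exp A * (2 ^ Fintype.card ι * (2 * exp (-(A + (L + 4))))) := by
        rw [Finset.sum_const, nsmul_eq_mul]; gcongr
    _ = 2 ^ Fintype.card ι * (2 * exp (-((L : ℝ) + 4))) := by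
        rw [neg_add, exp_add, exp_neg A]; field_simp
    _ ≤ 2 ^ Fintype.card ι * (1 / 2) ^ (L + 3) := by gcongr; exact two_mul_exp_neg_add_four_le L

theorem exists_levelNet_signs (hx : ∀ c ∈ D.F, 𝔼 z, D.φ c (x z) ≤ 2) (L : ℕ) :
    ∃ (T : Finset E) (Bad : Finset (ι → Bool)), D.IsLevelNet L T ∧
      (#Bad : ℝ) ≤ 2 ^ Fintype.card ι * ((1 - (1 / 2) ^ L) / 4) ∧
      ∀ σ ∉ Bad, ∀ c ∈ T, |D.signedSum x σ c| ≤
        4 * √(Fintype.card ι) * ∑ k ∈ Finset.range L, D.threshold k * D.width k := by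
  classical
  induction L with
  | zero =>
    refine ⟨{D.root}, ∅, isLevelNet_zero, by simp, fun σ _ c hc => ?_⟩
    rw [Finset.mem_singleton.1 hc]
    simp [signedSum, D.φ_root]
  | succ L ih =>
    obtain ⟨T, Bad, hT, hBad, hgood⟩ := ih
    obtain ⟨P, hPcard, hP, hPnet⟩ := hT.exists_links
    have hP' (l) (hl : l ∈ P) : l.1 ∈ D.F ∧ l.2 ∈ D.F ∧ D.rel L l.2 l.1 :=
      ⟨hT.1 (hP l hl).1, hPnet.1 (Finset.mem_image_of_mem _ hl), (hP l hl).2⟩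
    refine ⟨P.image Prod.snd, Bad ∪ P.biUnion (D.badSigns x L), hPnet,
      (Nat.cast_le.2 (Finset.card_union_le _ _)).trans ?_, fun σ hσ c hc => ?_⟩
    · push_cast
      refine (add_le_add hBad (card_biUnion_badSigns_le hx hPcard hP')).trans_eq ?_
      ring
    · rw [Finset.mem_union, not_or] at hσ
      obtain ⟨l, hl, rfl⟩ := Finset.mem_image.1 hc
      have hcoarse := hgood σ hσ.1 l.1 (hP l hl).1
      have hlink : |D.signedSum x σ l.2 - D.signedSum x σ l.1|
          ≤ D.threshold L * (4 * √(Fintype.card ι) * D.width L) := by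
        by_contra! h
        exact hσ.2 (Finset.mem_biUnion.2 ⟨l, hl, Finset.mem_filter.2 ⟨Finset.mem_univ _, h⟩⟩)
      rw [Finset.sum_range_succ, mul_add]
      have := abs_sub_abs_le_abs_sub (D.signedSum x σ l.2) (D.signedSum x σ l.1)
      nlinarith

theorem exists_signs_abs_signedSum_le (hx : ∀ c ∈ D.F, 𝔼 z, D.φ c (x z) ≤ 2) (L : ℕ) :
    ∃ σ : ι → Bool, ∀ c ∈ D.F, |D.signedSum x σ c| ≤
      4 * √(Fintype.card ι) * D.chainBound L (Fintype.card ι) := by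
  classical
  obtain ⟨T, Bad, hT, hBad, hgood⟩ := exists_levelNet_signs hx L
  obtain ⟨σ, hσ⟩ : ∃ σ, σ ∉ Bad := by
    by_contra! h
    rw [Finset.eq_univ_of_forall h, Finset.card_univ, Fintype.card_fun, Fintype.card_bool] at hBad
    push_cast at hBad
    have : (0 : ℝ) < (1 / 2) ^ L := by positivity
    have : (0 : ℝ) < 2 ^ Fintype.card ι := by positivity
    nlinarith
  refine ⟨σ, fun c hc => ?_⟩
  obtain ⟨h, hh, hr⟩ := hT.2.2 c hc
  have hnet := hgood σ hσ h hh
  have htail := abs_signedSum_sub_le hx hc (hT.1 hh) hr σ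
  have := abs_sub_abs_le_abs_sub (D.signedSum x σ c) (D.signedSum x σ h)
  rw [chainBound]
  nlinarith

theorem signedSum_eq_expect_sub_expect (x : ι × Bool → V) (σ : ι → Bool) (c : E) :
    D.signedSum x σ c
      = 2 * Fintype.card ι * (𝔼 i, D.φ c (x (i, σ i)) - 𝔼 z, D.φ c (x z)) := by
  have hhalf := Fintype.card_mul_expect fun i => D.φ c (x (i, σ i))
  have hall := Fintype.card_mul_expect fun z => D.φ c (x z)
  rw [Fintype.card_prod, Fintype.card_bool, Fintype.sum_prod_type] at hall
  push_cast at hall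
  rw [mul_sub, mul_assoc, hhalf, mul_comm (2 : ℝ) (Fintype.card ι : ℝ), hall, signedSum,
    Finset.mul_sum, ← Finset.sum_sub_distrib]
  refine Finset.sum_congr rfl fun i _ => ?_
  cases σ i <;> simp [boolSign] <;> ring

theorem exists_halving [Nonempty ι] (hx : ∀ c ∈ D.F, 𝔼 z, D.φ c (x z) ≤ 2) (L : ℕ) :
    ∃ σ : ι → Bool, ∀ c ∈ D.F, |𝔼 i, D.φ c (x (i, σ i)) - 𝔼 z, D.φ c (x z)|
      ≤ 2 * D.chainBound L (Fintype.card ι) / √(Fintype.card ι) := by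
  obtain ⟨σ, hσ⟩ := exists_signs_abs_signedSum_le hx L
  refine ⟨σ, fun c hc => ?_⟩
  have h := hσ c hc
  have hn : (0 : ℝ) < Fintype.card ι := mod_cast Fintype.card_pos
  rw [signedSum_eq_expect_sub_expect, abs_mul, abs_of_pos (by positivity)] at h
  rw [le_div_iff₀ (sqrt_pos.2 hn)]
  have hsq := mul_self_sqrt hn.le
  refine le_of_mul_le_mul_left ?_ (sqrt_pos.2 hn)
  linear_combination h / 2 + |𝔼 i, D.φ c (x (i, σ i)) - 𝔼 z, D.φ c (x z)| * hsq

theorem exists_half_sample {j : ℕ} {x : Fin (2 ^ (j + 1)) → V}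
    (hx : ∀ c ∈ D.F, 𝔼 i, D.φ c (x i) ≤ 2) {β : ℝ} (hβ : ∃ L, D.chainBound L (2 ^ j) ≤ β) :
    ∃ y : Fin (2 ^ j) → V,
      ∀ c ∈ D.F, |𝔼 i, D.φ c (y i) - 𝔼 i, D.φ c (x i)| ≤ 2 * β / √(2 ^ j) := by
  obtain ⟨L, hβ⟩ := hβ
  have e : Fin (2 ^ j) × Bool ≃ Fin (2 ^ (j + 1)) :=
    Fintype.equivOfCardEq (by simp [pow_succ])
  have expect_comp (c : E) : 𝔼 z, D.φ c (x (e z)) = 𝔼 i, D.φ c (x i) :=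
    Fintype.expect_equiv e _ _ fun _ => rfl
  have hx' : ∀ c ∈ D.F, 𝔼 z, D.φ c ((x ∘ e) z) ≤ 2 := fun c hc =>
    (expect_comp c).trans_le (hx c hc)
  obtain ⟨σ, hσ⟩ := exists_halving hx' L
  refine ⟨fun i => x (e (i, σ i)), fun c hc => ?_⟩
  rw [← expect_comp]
  refine (hσ c hc).trans ?_
  rw [Fintype.card_fin, Nat.cast_pow, Nat.cast_ofNat]
  gcongr

/-- The errors of the successive halvings form a geometric series of ratio `1 / √2`, and
`2 ∑ (1 / √2) ^ i ≤ 7`. -/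
theorem exists_subsample {J₀ : ℕ} {x : Fin (2 ^ J₀) → V} {β : ℝ} (hβ₀ : 0 ≤ β)
    (hx : ∀ c ∈ D.F, 𝔼 i, D.φ c (x i) ≤ 3 / 2)
    (hβ : ∀ j < J₀, ∃ L, D.chainBound L (2 ^ j) ≤ β) {J : ℕ} (hJ : J ≤ J₀)
    (hβJ : 7 * β / √(2 ^ J) ≤ 1 / 2) :
    ∃ y : Fin (2 ^ J) → V,
      ∀ c ∈ D.F, |𝔼 i, D.φ c (y i) - 𝔼 i, D.φ c (x i)| ≤ 7 * β / √(2 ^ J) := by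
  induction hJ using Nat.decreasingInduction with
  | self => exact ⟨x, fun c _ => by rw [sub_self, abs_zero]; positivity⟩
  | of_succ j hj ih =>
    have hgeom : 7 * β / √(2 ^ (j + 1)) + 2 * β / √(2 ^ j) ≤ 7 * β / √(2 ^ j) := by
      have hsqrt : (7 / 5 : ℝ) ≤ √2 := le_sqrt_of_sq_le (by norm_num)
      have : 7 * β / √(2 ^ (j + 1)) ≤ 7 * β / (√(2 ^ j) * (7 / 5)) := by
        rw [pow_succ, sqrt_mul (by positivity)]
        gcongr
      refine (add_le_add_left this _).trans_eq ?_
      field_simp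
      ring
    have : 0 ≤ 2 * β / √(2 ^ j) := by positivity
    obtain ⟨y, hy⟩ := ih (by linarith)
    obtain ⟨z, hz⟩ := exists_half_sample (D := D) (x := y)
      (fun c hc => by linarith [hx c hc, (abs_le.1 (hy c hc)).2]) (hβ j hj)
    refine ⟨z, fun c hc => (abs_sub_le _ (𝔼 i, D.φ c (y i)) _).trans ?_⟩
    linarith [hy c hc, hz c hc]

end ChainingFamily

/-! ### Nets -/

section Nets

/-- A maximal `R`-separated subset of `G` is an `R`-net. -/
theorem exists_net_of_card_separated_le {E : Type*} {G : Set E} {R : E → E → Prop}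
    (hrefl : ∀ x, R x x) (hsymm : ∀ x y, R x y → R y x) {A : ℝ}
    (hA : ∀ T : Finset E, (T : Set E) ⊆ G → (T : Set E).Pairwise (fun x y => ¬ R x y) →
      (#T : ℝ) ≤ A) :
    ∃ T : Finset E, (T : Set E) ⊆ G ∧ (#T : ℝ) ≤ A ∧ ∀ f ∈ G, ∃ h ∈ T, R f h := by
  classical
  by_contra! hcon
  have exists_separated (n : ℕ) : ∃ T : Finset E, (T : Set E) ⊆ G ∧
      (T : Set E).Pairwise (fun x y => ¬ R x y) ∧ #T = n := by
    induction n with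
    | zero => exact ⟨∅, by simp, by simp, rfl⟩
    | succ n ih =>
      obtain ⟨T, hTG, hTsep, hTcard⟩ := ih
      obtain ⟨f, hf, hfar⟩ := hcon T hTG (hA T hTG hTsep)
      refine ⟨insert f T, ?_, ?_, ?_⟩
      · rw [Finset.coe_insert]
        exact Set.insert_subset hf hTG
      · rw [Finset.coe_insert]
        exact hTsep.insert fun h hh _ => ⟨hfar h hh, fun hR => hfar h hh (hsymm _ _ hR)⟩
      · rw [Finset.card_insert_of_notMem fun hfT => hfar f hfT (hrefl f), hTcard]
  obtain ⟨T, hTG, hTsep, hTcard⟩ := exists_separated (⌊A⌋₊ + 1)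
  have hcard := hA T hTG hTsep
  rw [hTcard] at hcard
  push_cast at hcard
  linarith [Nat.lt_floor_add_one A]

variable {E : Type*} [NormedAddCommGroup E] [NormedSpace ℝ E] [FiniteDimensional ℝ E]

open Module (finrank)

theorem card_le_exp_of_separated {T : Finset E} {g : E} {s : ℝ} (hs : 0 < s)
    (hT : ∀ h ∈ T, ‖h - g‖ ≤ s) (hsep : (T : Set E).Pairwise fun x y => ¬ ‖x - y‖ ≤ s / 2) :
    (#T : ℝ) ≤ exp (2 * finrank ℝ E) := by
  classical
  have norm_scale (x : E) : ‖(2 / s) • x‖ = 2 / s * ‖x‖ := by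
    rw [norm_smul, norm_of_nonneg (by positivity)]
  have hinj : Function.Injective fun f : E => (2 / s) • (f - g) :=
    (smul_right_injective E (by positivity)).comp (sub_left_injective)
  have hcard := Besicovitch.card_le_of_separated (T.image fun f => (2 / s) • (f - g))
    (by
      simp only [Finset.forall_mem_image, norm_scale]
      intro f hf
      rw [div_mul_eq_mul_div, div_le_iff₀ hs]
      exact mul_le_mul_of_nonneg_left (hT f hf) two_pos.le)
    (by
      simp only [Finset.forall_mem_image, ← smul_sub, sub_sub_sub_cancel_right, norm_scale]
      intro f hf f' hf' hne
      have hfar : ¬ ‖f - f'‖ ≤ s / 2 := hsep hf hf' fun h => hne (by rw [h])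
      rw [div_mul_eq_mul_div, le_div_iff₀ hs]
      linarith)
  have hfive : (5 : ℝ) ≤ exp 2 := by
    rw [show (2 : ℝ) = 1 + 1 by norm_num, exp_add]
    nlinarith [exp_one_gt_d9]
  rw [Finset.card_image_of_injective _ hinj] at hcard
  calc (#T : ℝ) ≤ 5 ^ finrank ℝ E := mod_cast hcard
    _ ≤ exp 2 ^ finrank ℝ E := by gcongr
    _ = exp (2 * finrank ℝ E) := by rw [← exp_nat_mul, mul_comm]

theorem exists_half_radius_net (F : Set E) (g : E) {s : ℝ} (hs : 0 < s) :
    ∃ T : Finset E, (T : Set E) ⊆ F ∧ (#T : ℝ) ≤ exp (2 * finrank ℝ E) ∧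
      ∀ f ∈ F, ‖f - g‖ ≤ s → ∃ h ∈ T, ‖f - h‖ ≤ s / 2 := by
  obtain ⟨T, hTG, hTcard, hTnet⟩ := exists_net_of_card_separated_le
    (G := {f | f ∈ F ∧ ‖f - g‖ ≤ s}) (R := fun f h => ‖f - h‖ ≤ s / 2)
    (fun x => by rw [sub_self, norm_zero]; positivity)
    (fun x y h => by rwa [norm_sub_rev])
    fun T hT hsep => card_le_exp_of_separated hs (fun h hh => (hT hh).2) hsep
  exact ⟨T, fun h hh => (hTG hh).1, hTcard, fun f hf hfg => hTnet f ⟨hf, hfg⟩⟩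

theorem exists_net_of_norm_le {F : Set E} (h₀ : 0 ∈ F) {R : ℝ} (hR : 0 < R)
    (hF : ∀ f ∈ F, ‖f‖ ≤ R) (L : ℕ) :
    ∃ T : Finset E, (T : Set E) ⊆ F ∧ (#T : ℝ) ≤ exp (2 * finrank ℝ E) ^ L ∧
      ∀ f ∈ F, ∃ h ∈ T, ‖f - h‖ ≤ R / 2 ^ L := by
  classical
  induction L with
  | zero =>
    exact ⟨{0}, by simpa using h₀, by simp, fun f hf => ⟨0, by simp, by simpa using hF f hf⟩⟩
  | succ L ih =>
    obtain ⟨T, -, hTcard, hTnet⟩ := ih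
    choose net net_subset net_card net_cover using
      fun g => exists_half_radius_net F g (s := R / 2 ^ L) (by positivity)
    refine ⟨T.biUnion net, ?_, ?_, fun f hf => ?_⟩
    · rw [Finset.coe_biUnion]
      exact Set.iUnion₂_subset fun g _ => net_subset g
    · calc (#(T.biUnion net) : ℝ) ≤ ∑ g ∈ T, (#(net g) : ℝ) := mod_cast Finset.card_biUnion_le
        _ ≤ #T • exp (2 * finrank ℝ E) := Finset.sum_le_card_nsmul _ _ _ fun g _ => net_card g
        _ ≤ exp (2 * finrank ℝ E) ^ (L + 1) := by rw [nsmul_eq_mul, pow_succ]; gcongr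
    · obtain ⟨g, hg, hfg⟩ := hTnet f hf
      obtain ⟨h, hh, hfh⟩ := net_cover g f hf hfg
      exact ⟨h, Finset.mem_biUnion.2 ⟨g, hg, hh⟩, by rwa [pow_succ, ← div_div]⟩

end Nets

/-! ### Dual Sudakov minoration -/

section DualSudakov

open ProbabilityTheory

theorem exp_inner_mul_exp_neg_norm_sq {E : Type*} [NormedAddCommGroup E] [InnerProductSpace ℝ E]
    (b x : E) :
    exp ⟪b, x⟫ * exp (-(‖x‖ ^ 2 / 2)) = exp (‖b‖ ^ 2 / 2) * exp (-(‖x - b‖ ^ 2 / 2)) := by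
  rw [← exp_add, ← exp_add, norm_sub_sq_real, real_inner_comm]
  ring_nf

section Slab

variable {E ι : Type*} [NormedAddCommGroup E] [InnerProductSpace ℝ E]

/-- The intersection of the symmetric slabs of half-width `τ` with normals `v j`. -/
def slab (v : ι → E) (τ : ℝ) : Set E := {x | ∀ j, |⟪v j, x⟫| ≤ τ}

theorem measurableSet_slab [MeasurableSpace E] [OpensMeasurableSpace E] [Countable ι] (v : ι → E)
    (τ : ℝ) : MeasurableSet (slab v τ) := by
  have : slab v τ = ⋂ j, {x | |⟪v j, x⟫| ≤ τ} := by
    ext x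
    simp [slab]
  rw [this]
  exact MeasurableSet.iInter fun j => (isClosed_le (by fun_prop) continuous_const).measurableSet

end Slab

section Gaussian

variable {E ι : Type*} [NormedAddCommGroup E] [InnerProductSpace ℝ E] [FiniteDimensional ℝ E]
  [MeasurableSpace E] [BorelSpace E]

theorem integrable_exp_neg_norm_sq_div_two : Integrable fun x : E => exp (-(‖x‖ ^ 2 / 2)) := by
  have h := (GaussianFourier.integrable_cexp_neg_mul_sq_norm_add (V := E) (b := 1 / 2)
    (by norm_num) 0 0).norm
  refine h.congr (Filter.Eventually.of_forall fun x => ?_)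
  have hcast : -(1 / 2 : ℂ) * (‖x‖ : ℂ) ^ 2 + 0 * ((⟪(0 : E), x⟫ : ℝ) : ℂ)
      = ((-(‖x‖ ^ 2 / 2) : ℝ) : ℂ) := by
    push_cast; ring
  simp only [hcast, Complex.norm_exp, Complex.ofReal_re]

variable (E) in
/-- The standard Gaussian measure of a Euclidean space, given by its density so that the effect of
translations is visible. -/
noncomputable def gaussian : Measure E := volume.tilted fun x => -(‖x‖ ^ 2 / 2)

instance : IsProbabilityMeasure (gaussian E) :=
  isProbabilityMeasure_tilted integrable_exp_neg_norm_sq_div_two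

theorem integral_exp_inner_mul_gaussian (b : E) (g : E → ℝ) :
    ∫ x, exp ⟪b, x⟫ * g x ∂gaussian E = exp (‖b‖ ^ 2 / 2) * ∫ x, g (x + b) ∂gaussian E := by
  rw [gaussian, integral_tilted, integral_tilted, ← integral_const_mul,
    ← integral_add_right_eq_self _ b]
  congr 1 with x
  have h := exp_inner_mul_exp_neg_norm_sq b (x + b)
  rw [add_sub_cancel_right] at h
  rw [smul_eq_mul, smul_eq_mul]
  linear_combination g (x + b) / (∫ x : E, exp (-(‖x‖ ^ 2 / 2))) * h

theorem integrable_exp_inner_gaussian (b : E) :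
    Integrable (fun x => exp ⟪b, x⟫) (gaussian E) := by
  refine (integrable_tilted_iff integrable_exp_neg_norm_sq_div_two _).2 ?_
  simp_rw [smul_eq_mul, mul_comm (exp (-_)), exp_inner_mul_exp_neg_norm_sq]
  exact (integrable_exp_neg_norm_sq_div_two.comp_sub_right b).const_mul _

theorem hasSubgaussianMGF_inner (b : E) :
    HasSubgaussianMGF (fun x => ⟪b, x⟫) (‖b‖₊ ^ 2) (gaussian E) where
  integrable_exp_mul t := by
    simp_rw [← real_inner_smul_left]
    exact integrable_exp_inner_gaussian (t • b)
  mgf_le t := by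
    have h := integral_exp_inner_mul_gaussian (t • b) fun _ => 1
    simp only [mul_one, integral_const, probReal_univ, smul_eq_mul, real_inner_smul_left] at h
    rw [mgf, h, norm_smul, mul_pow, norm_eq_abs, sq_abs, mul_comm (t ^ 2)]
    rfl

theorem gaussian_lt_abs_inner_le (b : E) {τ : ℝ} (hτ : 0 ≤ τ) :
    (gaussian E).real {x | τ < |⟪b, x⟫|} ≤ 2 * exp (-τ ^ 2 / (2 * ‖b‖ ^ 2)) := by
  have hpos := (hasSubgaussianMGF_inner b).measure_ge_le hτ
  have hneg : (gaussian E).real {x | τ ≤ -⟪b, x⟫} ≤ _ :=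
    (hasSubgaussianMGF_inner b).neg.measure_ge_le hτ
  rw [NNReal.coe_pow, coe_nnnorm] at hpos hneg
  have hsubset : {x | τ < |⟪b, x⟫|} ⊆ {x | τ ≤ ⟪b, x⟫} ∪ {x | τ ≤ -⟪b, x⟫} :=
    fun x (hx : τ < |⟪b, x⟫|) => (lt_abs.1 hx).imp (fun h => h.le) (fun h => h.le)
  have := (measureReal_mono (μ := gaussian E) hsubset).trans (measureReal_union_le _ _)
  linarith

variable {v : ι → E}

theorem half_le_gaussian_slab [Fintype ι] [Nonempty ι] {K : ℝ} (hv : ∀ j, ‖v j‖ ^ 2 ≤ K) :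
    1 / 2 ≤ (gaussian E).real (slab v √(2 * K * log (4 * Fintype.card ι))) := by
  set n := Fintype.card ι
  have hn : (1 : ℝ) ≤ n := mod_cast Fintype.card_pos
  have hlog : 0 < log (4 * n) := log_pos (by linarith)
  set τ := √(2 * K * log (4 * n))
  have tail_le (j : ι) : (gaussian E).real {x | τ < |⟪v j, x⟫|} ≤ 1 / (2 * n) := by
    rcases eq_or_ne (v j) 0 with h0 | h0
    · have : {x : E | τ < |⟪v j, x⟫|} = ∅ := by
        ext x
        simp [h0, τ, sqrt_nonneg]
      rw [this, measureReal_empty]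
      positivity
    have hvj : 0 < ‖v j‖ ^ 2 := by positivity
    have hτ : τ ^ 2 = 2 * K * log (4 * n) := sq_sqrt (by nlinarith [hv j])
    calc _ ≤ 2 * exp (-τ ^ 2 / (2 * ‖v j‖ ^ 2)) := gaussian_lt_abs_inner_le _ (sqrt_nonneg _)
      _ ≤ 2 * exp (-log (4 * n)) := by
          gcongr
          rw [neg_div, neg_le_neg_iff, le_div_iff₀ (by positivity), hτ]
          nlinarith [hv j]
      _ = 1 / (2 * n) := by
          rw [exp_neg, exp_log (by positivity)]
          field_simp
          norm_num
  have hcompl : (slab v τ)ᶜ = ⋃ j, {x | τ < |⟪v j, x⟫|} := by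
    ext x
    simp [slab]
  have hunion : (gaussian E).real (slab v τ)ᶜ ≤ 1 / 2 := by
    rw [hcompl]
    calc _ ≤ ∑ j, (gaussian E).real {x | τ < |⟪v j, x⟫|} := measureReal_iUnion_fintype_le _
      _ ≤ ∑ _j : ι, 1 / (2 * (n : ℝ)) := Finset.sum_le_sum fun j _ => tail_le j
      _ = 1 / 2 := by
          rw [Finset.sum_const, Finset.card_univ, nsmul_eq_mul]
          change (n : ℝ) * _ = _
          field_simp
  rw [probReal_compl_eq_one_sub (measurableSet_slab v τ)] at hunion
  linarith

theorem exp_mul_gaussian_le_add_translates {V : Set E} (hV : MeasurableSet V) (b : E) :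
    2 * (exp (-(‖b‖ ^ 2 / 2)) * (gaussian E).real V) ≤
      (gaussian E).real ((· + b) ⁻¹' V) + (gaussian E).real ((· + -b) ⁻¹' V) := by
  have translate (b : E) : ∫ x, exp ⟪b, x⟫ * V.indicator 1 x ∂gaussian E =
      exp (‖b‖ ^ 2 / 2) * (gaussian E).real ((· + b) ⁻¹' V) := by
    rw [integral_exp_inner_mul_gaussian, ← integral_indicator_one ((measurable_add_const b) hV)]
    rfl
  have integrable_indicator (b : E) :
      Integrable (fun x => exp ⟪b, x⟫ * V.indicator 1 x) (gaussian E) := by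
    have : (fun x => exp ⟪b, x⟫ * V.indicator 1 x) = V.indicator fun x => exp ⟪b, x⟫ := by
      ext x
      by_cases hx : x ∈ V <;> simp [hx]
    rw [this]
    exact (integrable_exp_inner_gaussian b).indicator hV
  have hmono : ∫ x, 2 * V.indicator 1 x ∂gaussian E ≤
      ∫ x, (exp ⟪b, x⟫ * V.indicator 1 x + exp ⟪-b, x⟫ * V.indicator 1 x) ∂gaussian E := by
    refine integral_mono (((integrable_const 1).indicator hV).const_mul 2)
      ((integrable_indicator b).add (integrable_indicator (-b))) fun x => ?_
    have hcosh := one_le_cosh ⟪b, x⟫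
    rw [cosh_eq, ← inner_neg_left] at hcosh
    have hnonneg : 0 ≤ V.indicator (1 : E → ℝ) x := Set.indicator_nonneg (fun _ _ => zero_le_one) x
    simp only
    nlinarith
  rw [integral_const_mul, integral_indicator_one hV, integral_add (integrable_indicator b)
    (integrable_indicator (-b)), translate, translate, norm_neg, ← mul_add] at hmono
  rw [exp_neg, ← mul_assoc, mul_comm 2, mul_assoc, inv_mul_le_iff₀ (exp_pos _)]
  exact hmono

theorem sum_gaussian_translate_slab_le_one [Countable ι] {T : Finset E} {τ s c : ℝ}
    (hc : 4 * τ ≤ |c| * s)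
    (hsep : ∀ x ∈ T, ∀ y ∈ T, x ≠ y → ∃ j, s / 2 < |⟪v j, x - y⟫|) (hc0 : c ≠ 0) :
    ∑ h ∈ T, (gaussian E).real ((· + c • h) ⁻¹' slab v τ) ≤ 1 := by
  have hdisj : (T : Set E).PairwiseDisjoint fun h => (· + c • h) ⁻¹' slab v τ := by
    intro h hh h' hh' hne
    refine Set.disjoint_left.2 fun x hx hx' => ?_
    obtain ⟨j, hj⟩ := hsep h hh h' hh' hne
    have hle : |c| * |⟪v j, h - h'⟫| ≤ 2 * τ :=
      calc |c| * |⟪v j, h - h'⟫| = |⟪v j, x + c • h⟫ - ⟪v j, x + c • h'⟫| := by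
            rw [← abs_mul, ← inner_sub_right, add_sub_add_left_eq_sub, ← smul_sub,
              real_inner_smul_right]
        _ ≤ |⟪v j, x + c • h⟫| + |⟪v j, x + c • h'⟫| := abs_sub _ _
        _ ≤ 2 * τ := by linarith [hx j, hx' j]
    nlinarith [abs_pos.2 hc0]
  rw [← measureReal_biUnion_finset hdisj fun h _ => measurable_add_const _ (measurableSet_slab v τ)]
  exact measureReal_le_one

end Gaussian

variable {E ι : Type*} [NormedAddCommGroup E] [InnerProductSpace ℝ E] [FiniteDimensional ℝ E]
  [Fintype ι] [Nonempty ι]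

/-- Scaled by `c`, the separated points are centres of disjoint translates of a slab of Gaussian
measure at least `1 / 2`, and a translation by `b` shrinks the measure at most by
`exp (-‖b‖ ^ 2 / 2)`. -/
theorem card_le_of_abs_inner_separated {v : ι → E} {K ρ s : ℝ} (hK : 0 < K)
    (hv : ∀ j, ‖v j‖ ^ 2 ≤ K) {T : Finset E} (hT : ∀ h ∈ T, ‖h‖ ^ 2 ≤ ρ) (hs : 0 < s)
    (hsep : ∀ x ∈ T, ∀ y ∈ T, x ≠ y → ∃ j, s / 2 < |⟪v j, x - y⟫|) :
    (#T : ℝ) ≤ 2 * exp (16 * K * ρ * log (4 * Fintype.card ι) / s ^ 2) := by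
  borelize E
  have hn : (1 : ℝ) ≤ Fintype.card ι := mod_cast Fintype.card_pos
  have hlog : 0 < log (4 * Fintype.card ι) := log_pos (by linarith)
  set τ := √(2 * K * log (4 * Fintype.card ι)) with hτ
  have : 0 < τ := sqrt_pos.2 (by positivity)
  set c := 4 * τ / s with hc
  have hc_pos : 0 < c := by positivity
  have hcs : 4 * τ ≤ |c| * s := by rw [abs_of_pos hc_pos, hc, div_mul_cancel₀ _ hs.ne']
  have hexp : 16 * K * ρ * log (4 * Fintype.card ι) / s ^ 2 = c ^ 2 * ρ / 2 := by
    rw [hc, div_pow, mul_pow, hτ, sq_sqrt (by positivity)]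
    ring
  have hpos := sum_gaussian_translate_slab_le_one hcs hsep hc_pos.ne'
  have hneg := sum_gaussian_translate_slab_le_one (c := -c) (by rwa [abs_neg]) hsep
    (neg_ne_zero.2 hc_pos.ne')
  have translates_ge (h : E) (hh : h ∈ T) : exp (-(c ^ 2 * ρ / 2)) ≤
      (gaussian E).real ((· + c • h) ⁻¹' slab v τ) +
        (gaussian E).real ((· + -c • h) ⁻¹' slab v τ) := by
    have hmass := half_le_gaussian_slab hv
    have htrans := exp_mul_gaussian_le_add_translates (measurableSet_slab v τ) (c • h)
    have hshrink : exp (-(c ^ 2 * ρ / 2)) ≤ exp (-(‖c • h‖ ^ 2 / 2)) := by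
      rw [norm_smul, mul_pow, norm_eq_abs, sq_abs]
      gcongr
      exact hT h hh
    rw [neg_smul]
    nlinarith [exp_pos (-(‖c • h‖ ^ 2 / 2))]
  have hsum := Finset.card_nsmul_le_sum T _ _ translates_ge
  rw [Finset.sum_add_distrib, nsmul_eq_mul, exp_neg, ← div_eq_mul_inv, div_le_iff₀ (exp_pos _)]
    at hsum
  rw [hexp]
  nlinarith [exp_pos (c ^ 2 * ρ / 2)]

end DualSudakov

/-! ### Random sampling -/

section Sampling

open ProbabilityTheory

variable {Ω ι : Type*} [MeasurableSpace Ω] {μ : Measure Ω} [IsProbabilityMeasure μ] [Fintype ι]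

theorem pi_le_expect_sub_integral_le {f : Ω → ℝ} (hf : Measurable f) {a b η : ℝ} (hab : a < b)
    (hfab : ∀ y, f y ∈ Set.Icc a b) (hη : 0 ≤ η) :
    (Measure.pi fun _ : ι => μ).real {x | η ≤ 𝔼 i, f (x i) - ∫ y, f y ∂μ} ≤
      exp (-(2 * Fintype.card ι * η ^ 2 / (b - a) ^ 2)) := by
  rcases isEmpty_or_nonempty ι with hι | hι
  · simp
  have hn : (0 : ℝ) < Fintype.card ι := mod_cast Fintype.card_pos
  have hsub (i : ι) : HasSubgaussianMGF (fun x : ι → Ω => f (x i) - ∫ y, f y ∂μ)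
      ((‖b - a‖₊ / 2) ^ 2) (Measure.pi fun _ => μ) := by
    refine HasSubgaussianMGF.of_map (Y := fun x : ι → Ω => x i)
      (X := fun y : Ω => f y - ∫ y, f y ∂μ)
      (measurable_pi_apply i).aemeasurable ?_
    rw [(measurePreserving_eval (fun _ : ι => μ) i).map_eq]
    exact hasSubgaussianMGF_of_mem_Icc hf.aemeasurable (Filter.Eventually.of_forall hfab)
  have hindep : iIndepFun (fun i (x : ι → Ω) => f (x i) - ∫ y, f y ∂μ) (Measure.pi fun _ => μ) :=
    iIndepFun_pi (X := fun _ (y : Ω) => f y - ∫ y, f y ∂μ) fun _ => (hf.sub_const _).aemeasurable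
  have htail := HasSubgaussianMGF.measure_sum_ge_le_of_iIndepFun hindep (s := Finset.univ)
    (fun i _ => hsub i) (mul_nonneg hn.le hη)
  have hevent : {x : ι → Ω | η ≤ 𝔼 i, f (x i) - ∫ y, f y ∂μ} =
      {x | Fintype.card ι * η ≤ ∑ i, (f (x i) - ∫ y, f y ∂μ)} := by
    ext x
    simp only [Set.mem_ofPred_eq, Finset.sum_sub_distrib, Finset.sum_const, Finset.card_univ,
      nsmul_eq_mul, ← Fintype.card_mul_expect fun i => f (x i), ← mul_sub, mul_le_mul_iff_right₀ hn]
  rw [hevent]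
  refine htail.trans_eq ?_
  have : b - a ≠ 0 := (sub_pos.2 hab).ne'
  simp only [Finset.sum_const, Finset.card_univ, nsmul_eq_mul, NNReal.coe_mul, NNReal.coe_pow,
    NNReal.coe_div, coe_nnnorm, norm_eq_abs, div_pow, sq_abs, NNReal.coe_natCast, NNReal.coe_ofNat]
  congr 1
  field_simp

theorem pi_lt_abs_expect_sub_integral_le {f : Ω → ℝ} (hf : Measurable f) {a b η : ℝ} (hab : a < b)
    (hfab : ∀ y, f y ∈ Set.Icc a b) (hη : 0 ≤ η) :
    (Measure.pi fun _ : ι => μ).real {x | η < |𝔼 i, f (x i) - ∫ y, f y ∂μ|} ≤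
      2 * exp (-(2 * Fintype.card ι * η ^ 2 / (b - a) ^ 2)) := by
  have hpos := pi_le_expect_sub_integral_le (ι := ι) (μ := μ) hf hab hfab hη
  have hneg := pi_le_expect_sub_integral_le (ι := ι) (μ := μ) hf.neg (neg_lt_neg hab)
    (fun y => ⟨neg_le_neg (hfab y).2, neg_le_neg (hfab y).1⟩) hη
  simp only [Pi.neg_apply, Finset.expect_neg_distrib, integral_neg, neg_sub_neg] at hneg
  have hsubset : {x : ι → Ω | η < |𝔼 i, f (x i) - ∫ y, f y ∂μ|} ⊆
      {x | η ≤ 𝔼 i, f (x i) - ∫ y, f y ∂μ} ∪ {x | η ≤ ∫ y, f y ∂μ - 𝔼 i, f (x i)} :=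
    fun x (hx : η < |_|) => (lt_abs.1 hx).imp (fun h => h.le) (fun h => by simpa using h.le)
  have := (measureReal_mono (μ := Measure.pi fun _ : ι => μ) hsubset).trans
    (measureReal_union_le _ _)
  linarith

theorem exists_sample_abs_expect_sub_integral_le {G : Finset (Ω → ℝ)}
    (hG : ∀ g ∈ G, Measurable g) {a b η : ℝ} (hab : a < b)
    (hGab : ∀ g ∈ G, ∀ y, g y ∈ Set.Icc a b) (hη : 0 ≤ η)
    (hcard : #G * (2 * exp (-(2 * Fintype.card ι * η ^ 2 / (b - a) ^ 2))) < 1) :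
    ∃ x : ι → Ω, ∀ g ∈ G, |𝔼 i, g (x i) - ∫ y, g y ∂μ| ≤ η := by
  by_contra! hbad
  have hcover : Set.univ ⊆ ⋃ g ∈ G, {x : ι → Ω | η < |𝔼 i, g (x i) - ∫ y, g y ∂μ|} :=
    fun x _ => by simpa using hbad x
  have hle := (measureReal_mono (μ := Measure.pi fun _ : ι => μ) hcover (measure_ne_top _ _)).trans
    (measureReal_biUnion_finset_le G _)
  rw [probReal_univ] at hle
  have hsum := Finset.sum_le_card_nsmul G _ _ fun g hg =>
    pi_lt_abs_expect_sub_integral_le (ι := ι) (μ := μ) (hG g hg) hab (hGab g hg) hη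
  rw [nsmul_eq_mul] at hsum
  linarith

theorem abs_expect_sub_integral_le_of_abs_sub_le [Nonempty ι] {f g : Ω → ℝ} {x : ι → Ω} {η τ : ℝ}
    (hf : Integrable f μ) (hg : Integrable g μ) (hfg : ∀ y, |f y - g y| ≤ τ)
    (hx : |𝔼 i, g (x i) - ∫ y, g y ∂μ| ≤ η) :
    |𝔼 i, f (x i) - ∫ y, f y ∂μ| ≤ η + 2 * τ := by
  have hexpect : |𝔼 i, f (x i) - 𝔼 i, g (x i)| ≤ τ := by
    rw [← Finset.expect_sub_distrib]
    exact (Finset.abs_expect_le _ _).trans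
      (Finset.expect_le Finset.univ_nonempty fun i _ => hfg (x i))
  have hintegral : |∫ y, f y ∂μ - ∫ y, g y ∂μ| ≤ τ := by
    rw [← integral_sub hf hg]
    simpa using norm_integral_le_of_norm_le_const (μ := μ)
      (Filter.Eventually.of_forall (p := fun y => ‖f y - g y‖ ≤ τ) hfg)
  rw [abs_le] at *
  constructor <;> linarith

theorem exists_sample_of_net [Nonempty ι] {F : Set (Ω → ℝ)} {G : Finset (Ω → ℝ)} {a b η τ : ℝ}
    (hF : ∀ f ∈ F, Integrable f μ) (hG : ∀ g ∈ G, Measurable g)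
    (hGab : ∀ g ∈ G, ∀ y, g y ∈ Set.Icc a b) (hFG : ∀ f ∈ F, ∃ g ∈ G, ∀ y, |f y - g y| ≤ τ)
    (hab : a < b) (hη : 0 ≤ η)
    (hcard : #G * (2 * exp (-(2 * Fintype.card ι * η ^ 2 / (b - a) ^ 2))) < 1) :
    ∃ x : ι → Ω, ∀ f ∈ F, |𝔼 i, f (x i) - ∫ y, f y ∂μ| ≤ η + 2 * τ := by
  obtain ⟨x, hx⟩ := exists_sample_abs_expect_sub_integral_le (μ := μ) hG hab hGab hη hcard
  refine ⟨x, fun f hf => ?_⟩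
  obtain ⟨g, hg, hfg⟩ := hFG f hf
  have hg_int : Integrable g μ := Integrable.of_mem_Icc a b (hG g hg).aemeasurable
    (Filter.Eventually.of_forall (hGab g hg))
  exact abs_expect_sub_integral_le_of_abs_sub_le (hF f hf) hg_int hfg (hx g hg)

end Sampling

/-! ### Growth functions -/

/-- `Φ` grows on `(0, ∞)` at least like `t ^ p` and at most like `t ^ q`, that is, `Φ t / t ^ p` is
increasing and `Φ t / t ^ q` is decreasing. Only the values of `Φ` on `[0, ∞)` matter. -/
structure HasPowerGrowth (Φ : ℝ → ℝ) (p q : ℝ) : Prop where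
  one_le_lower : 1 ≤ p
  one_le_upper : 1 ≤ q
  map_zero : Φ 0 = 0
  pos : ∀ {t}, 0 < t → 0 < Φ t
  le_rpow_mul : ∀ {s t}, 0 < s → s ≤ t → Φ s ≤ (s / t) ^ p * Φ t
  rpow_mul_le : ∀ {s t}, 0 < s → s ≤ t → (s / t) ^ q * Φ t ≤ Φ s

theorem hasPowerGrowth_sq : HasPowerGrowth (fun t => t ^ 2) 2 2 where
  one_le_lower := one_le_two
  one_le_upper := one_le_two
  map_zero := by simp
  pos := fun ht => pow_pos ht 2
  le_rpow_mul := fun hs hst => by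
    rw [rpow_two, div_pow, div_mul_cancel₀ _ (pow_pos (hs.trans_le hst) 2).ne']
  rpow_mul_le := fun hs hst => by
    rw [rpow_two, div_pow, div_mul_cancel₀ _ (pow_pos (hs.trans_le hst) 2).ne']

theorem sq_le_rpow_mul_rpow {a s p : ℝ} (ha : 0 ≤ a) (has : a ≤ s) (hp : p ≤ 2) :
    a ^ 2 ≤ s ^ (2 - p) * a ^ p := by
  rcases ha.eq_or_lt with rfl | ha
  · simpa using mul_nonneg (rpow_nonneg has _) (rpow_nonneg le_rfl p)
  · calc a ^ 2 = a ^ (2 - p) * a ^ p := by rw [← rpow_add ha, sub_add_cancel, rpow_two]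
      _ ≤ s ^ (2 - p) * a ^ p := by
        gcongr

theorem abs_sub_rpow_le {p : ℝ} (hp₁ : 1 ≤ p) (hp₂ : p ≤ 2) (a b : ℝ) :
    |a - b| ^ p ≤ 2 * (|a| ^ p + |b| ^ p) := by
  calc |a - b| ^ p ≤ (|a| + |b|) ^ p := by
        gcongr
        exact abs_sub a b
    _ ≤ 2 ^ (p - 1) * (|a| ^ p + |b| ^ p) :=
        mod_cast NNReal.rpow_add_le_mul_rpow_add_rpow ⟨|a|, abs_nonneg a⟩ ⟨|b|, abs_nonneg b⟩ hp₁
    _ ≤ 2 ^ (1 : ℝ) * (|a| ^ p + |b| ^ p) := by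
        gcongr
        · exact one_le_two
        · linarith
    _ = 2 * (|a| ^ p + |b| ^ p) := by rw [rpow_one]

namespace HasPowerGrowth

variable {Φ : ℝ → ℝ} {p q s t M l : ℝ}

theorem of_isPhiPrefun (hp : 1 ≤ p) (hpq : p ≤ q) (hpre : IsPhiPrefun Φ) (hinc : IncP Φ p)
    (hdec : DecQ Φ q) : HasPowerGrowth Φ p q where
  one_le_lower := hp
  one_le_upper := hp.trans hpq
  map_zero := hpre.map_zero
  pos {t} ht := by
    obtain ⟨T, hΦT, hT⟩ := ((hpre.tendsto_atTop.eventually_gt_atTop 0).and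
      (Filter.eventually_gt_atTop t)).exists
    have := (div_pos hΦT (rpow_pos_of_pos (ht.trans hT) q)).trans_le (hdec t T ht hT)
    exact (div_pos_iff_of_pos_right (rpow_pos_of_pos ht q)).1 this
  le_rpow_mul {s t} hs hst := by
    rcases hst.eq_or_lt with rfl | hlt
    · rw [div_self hs.ne', one_rpow, one_mul]
    · have := hinc s t hs hlt
      rwa [div_le_iff₀ (rpow_pos_of_pos hs p), div_mul_comm, ← div_rpow hs.le (hs.le.trans hst)]
        at this
  rpow_mul_le {s t} hs hst := by
    rcases hst.eq_or_lt with rfl | hlt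
    · rw [div_self hs.ne', one_rpow, one_mul]
    · have := hdec s t hs hlt
      rwa [le_div_iff₀ (rpow_pos_of_pos hs q), div_mul_comm, ← div_rpow hs.le (hs.le.trans hst)]
        at this

theorem of_lower_le (h : HasPowerGrowth Φ p q) {p' : ℝ} (hp' : 1 ≤ p') (hpp' : p' ≤ p) :
    HasPowerGrowth Φ p' q where
  __ := h
  one_le_lower := hp'
  le_rpow_mul {s t} hs hst := by
    have ht := hs.trans_le hst
    refine (h.le_rpow_mul hs hst).trans (mul_le_mul_of_nonneg_right ?_ (h.pos ht).le)
    exact rpow_le_rpow_of_exponent_ge (div_pos hs ht) ((div_le_one ht).2 hst) hpp'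

theorem nonneg (h : HasPowerGrowth Φ p q) (ht : 0 ≤ t) : 0 ≤ Φ t := by
  rcases ht.eq_or_lt with rfl | ht
  · exact h.map_zero.ge
  · exact (h.pos ht).le

theorem le_div_mul (h : HasPowerGrowth Φ p q) (hs : 0 ≤ s) (hst : s ≤ t) : Φ s ≤ s / t * Φ t := by
  rcases hs.eq_or_lt with rfl | hs
  · simp [h.map_zero]
  · simpa using (h.of_lower_le le_rfl h.one_le_lower).le_rpow_mul hs hst

theorem monotoneOn (h : HasPowerGrowth Φ p q) : MonotoneOn Φ (Set.Ici 0) := fun _ hs _ ht hst =>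
  (h.le_div_mul hs hst).trans (mul_le_of_le_one_left (h.nonneg ht) (div_le_one_of_le₀ hst ht))

theorem measurable_comp_abs (h : HasPowerGrowth Φ p q) : Measurable fun t => Φ |t| := by
  have hmono : Monotone fun t => Φ (max t 0) := fun s t hst =>
    h.monotoneOn (le_max_right s 0) (le_max_right t 0) (max_le_max_right 0 hst)
  simpa [Function.comp_def] using hmono.measurable.comp (measurable_norm (α := ℝ))

/-- Bernoulli's inequality turns the upper growth bound into a Lipschitz bound. -/
theorem sub_le (h : HasPowerGrowth Φ p q) (hs : 0 ≤ s) (hst : s ≤ t) :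
    Φ t - Φ s ≤ q * Φ t * ((t - s) / t) := by
  rcases (hs.trans hst).eq_or_lt with rfl | ht
  · simp [hst.antisymm hs]
  have hΦt := h.pos ht
  rw [sub_div, div_self ht.ne']
  rcases hs.eq_or_lt with rfl | hs
  · rw [h.map_zero, zero_div, sub_zero, sub_zero, mul_one]
    exact le_mul_of_one_le_left hΦt.le h.one_le_upper
  · have hbernoulli : 1 + q * (s / t - 1) ≤ (s / t) ^ q := by
      have hst₀ := div_pos hs ht
      simpa using one_add_mul_self_le_rpow_one_add (s := s / t - 1) (by linarith) h.one_le_upper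
    have := (mul_le_mul_of_nonneg_right hbernoulli hΦt.le).trans (h.rpow_mul_le hs hst)
    linarith

theorem sub_le_div_mul (h : HasPowerGrowth Φ p q) (hs : 0 ≤ s) (hst : s ≤ t) (htM : t ≤ M) :
    Φ t - Φ s ≤ q * Φ M / M * (t - s) := by
  have hq := h.one_le_upper
  rcases (hs.trans hst).eq_or_lt with rfl | ht
  · simp [hst.antisymm hs]
  calc Φ t - Φ s ≤ q * Φ t * ((t - s) / t) := h.sub_le hs hst
    _ ≤ q * (t / M * Φ M) * ((t - s) / t) := by
        gcongr
        exact h.le_div_mul ht.le htM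
    _ = q * Φ M / M * (t - s) := by field_simp

theorem abs_comp_abs_sub_le (h : HasPowerGrowth Φ p q) (hs : |s| ≤ M) (ht : |t| ≤ M) :
    |(Φ |s|) - (Φ |t|)| ≤ q * Φ M / M * |s - t| := by
  wlog hst : |t| ≤ |s| generalizing s t
  · rw [abs_sub_comm (Φ _), abs_sub_comm s]
    exact this ht hs (le_of_not_ge hst)
  have ht₀ := abs_nonneg t
  have hM := ht₀.trans ht
  have hΦM := h.nonneg hM
  have hq := h.one_le_upper
  rw [abs_of_nonneg (sub_nonneg.2 (h.monotoneOn ht₀ (ht₀.trans hst) hst))]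
  refine (h.sub_le_div_mul ht₀ hst hs).trans ?_
  gcongr
  exact abs_sub_abs_le_abs_sub s t

theorem sq_sub_le (h : HasPowerGrowth Φ p q) (hp : p ≤ 2) (hs : 0 ≤ s) (hst : s ≤ t) (htM : t ≤ M) :
    (Φ t - Φ s) ^ 2 ≤ q ^ 2 * Φ M * ((t - s) / M) ^ p * (Φ t + Φ s) := by
  have hΦs := h.nonneg hs
  rcases (hs.trans hst).eq_or_lt with rfl | ht
  · simp [hst.antisymm hs, h.map_zero]
  have hΦt := h.pos ht
  have hM := ht.trans_le htM
  have hΦM := h.pos hM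
  set r := (t - s) / t with hr
  have hr₀ : 0 ≤ r := div_nonneg (sub_nonneg.2 hst) ht.le
  have hr₁ : r ≤ 1 := div_le_one_of_le₀ (sub_le_self _ hs) ht.le
  have hr₂ : r ^ 2 ≤ r ^ p := by simpa using sq_le_rpow_mul_rpow hr₀ hr₁ hp
  have hmono := sub_nonneg.2 (h.monotoneOn hs ht.le hst)
  calc (Φ t - Φ s) ^ 2 ≤ (q * Φ t * r) ^ 2 := pow_le_pow_left₀ hmono (h.sub_le hs hst) 2
    _ = q ^ 2 * Φ t * r ^ 2 * Φ t := by ring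
    _ ≤ q ^ 2 * ((t / M) ^ p * Φ M) * r ^ p * (Φ t + Φ s) := by
        gcongr
        · exact h.le_rpow_mul ht htM
        · exact le_add_of_nonneg_right hΦs
    _ = q ^ 2 * Φ M * ((t - s) / M) ^ p * (Φ t + Φ s) := by
        rw [show (t - s) / M = t / M * r by rw [hr]; field_simp,
          mul_rpow (by positivity : 0 ≤ t / M) hr₀]
        ring

theorem sq_comp_abs_sub_le (h : HasPowerGrowth Φ p q) (hp : p ≤ 2) (hs : |s| ≤ M) (ht : |t| ≤ M) :
    (Φ |s| - Φ |t|) ^ 2 ≤ q ^ 2 * Φ M * (|s - t| / M) ^ p * (Φ |s| + Φ |t|) := by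
  wlog hst : |t| ≤ |s| generalizing s t
  · rw [← neg_sub (Φ _), neg_sq, abs_sub_comm s, add_comm (Φ _)]
    exact this ht hs (le_of_not_ge hst)
  have ht₀ := abs_nonneg t
  have hM := ht₀.trans ht
  have hΦM := h.nonneg hM
  have hp₀ := zero_le_one.trans h.one_le_lower
  have hΦ := add_nonneg (h.nonneg (abs_nonneg s)) (h.nonneg ht₀)
  have : 0 ≤ (|s| - |t|) / M := div_nonneg (sub_nonneg.2 hst) hM
  refine (h.sq_sub_le hp ht₀ hst hs).trans ?_
  gcongr
  exact abs_sub_abs_le_abs_sub s t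

theorem rpow_abs_le (h : HasPowerGrowth Φ p q) (t : ℝ) : |t| ^ p ≤ 1 + Φ |t| / Φ 1 := by
  have hΦ₁ := h.pos one_pos
  rcases le_total |t| 1 with ht | ht
  · have := rpow_le_one (abs_nonneg t) ht (zero_le_one.trans h.one_le_lower)
    have := div_nonneg (h.nonneg (abs_nonneg t)) hΦ₁.le
    linarith
  · have ht₀ : 0 < |t| ^ p := rpow_pos_of_pos (one_pos.trans_le ht) p
    have := h.le_rpow_mul one_pos ht
    rw [div_rpow zero_le_one (abs_nonneg t), one_rpow, one_div_mul_eq_div, le_div_iff₀ ht₀,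
      mul_comm, ← le_div_iff₀ hΦ₁] at this
    linarith

theorem comp_div_le (h : HasPowerGrowth Φ p q) (ht : 0 ≤ t) (hl : 1 ≤ l) : Φ (t / l) ≤ Φ t / l := by
  have hl₀ := one_pos.trans_le hl
  rcases ht.eq_or_lt with rfl | ht
  · simp [h.map_zero]
  · refine (h.le_div_mul (div_pos ht hl₀).le (div_le_self ht.le hl)).trans_eq ?_
    field_simp

theorem le_rpow_mul_comp_div (h : HasPowerGrowth Φ p q) (ht : 0 ≤ t) (hl : 1 ≤ l) :
    Φ t ≤ l ^ q * Φ (t / l) := by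
  have hl₀ := one_pos.trans_le hl
  rcases ht.eq_or_lt with rfl | ht
  · simp [h.map_zero]
  · have := h.rpow_mul_le (div_pos ht hl₀) (div_le_self ht.le hl)
    rwa [div_div_cancel_left' ht.ne', inv_rpow hl₀.le, inv_mul_le_iff₀ (rpow_pos_of_pos hl₀ q)]
      at this

end HasPowerGrowth

/-! ### Parseval frames -/

section Frames

open Module

/-- The functions `y ↦ ⟪u y, c⟫`, `c ∈ E`, form a copy of `E` in `L²(μ)`, and satisfy
`|⟪u y, c⟫| ≤ √K * ‖c‖` pointwise. This is the coordinate form of a subspace of functions on which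
the sup norm is at most `√K` times the `L²` norm: `u y` represents the evaluation at `y`. -/
structure IsParsevalFrame {Ω E : Type*} [MeasurableSpace Ω] [NormedAddCommGroup E]
    [InnerProductSpace ℝ E] (μ : Measure Ω) (u : Ω → E) (K : ℝ) : Prop where
  measurable_inner : ∀ c, Measurable fun y => ⟪u y, c⟫
  integral_inner_sq : ∀ c, ∫ y, ⟪u y, c⟫ ^ 2 ∂μ = ‖c‖ ^ 2
  norm_sq_le : ∀ y, ‖u y‖ ^ 2 ≤ K

/-- The coefficient vectors `c` with `∫ Φ(|⟪u y, c⟫|) dμ ≤ 1`, essentially the unit ball of the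
Luxemburg functional. -/
def modularBall {Ω E : Type*} [MeasurableSpace Ω] [NormedAddCommGroup E] [InnerProductSpace ℝ E]
    (μ : Measure Ω) (u : Ω → E) (Φ : ℝ → ℝ) : Set E :=
  {c | ∫ y, Φ |⟪u y, c⟫| ∂μ ≤ 1}

/-- An upper bound for `|⟪u y, c⟫|` when `c` ranges over the modular ball of `Φ`, for `Φ` growing at
least like `t ^ p` with `p ≤ 2`. -/
noncomputable def supBound (Φ : ℝ → ℝ) (p K : ℝ) : ℝ :=
  ((1 + 1 / Φ 1) * K) ^ (1 / p)

namespace HasPowerGrowth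

variable {Φ : ℝ → ℝ} {p q K : ℝ}

theorem one_le_one_add_one_div (hΦ : HasPowerGrowth Φ p q) : 1 ≤ 1 + 1 / Φ 1 :=
  le_add_of_nonneg_right (one_div_nonneg.2 (hΦ.pos one_pos).le)

theorem supBound_rpow (hΦ : HasPowerGrowth Φ p q) (hK : 0 ≤ K) :
    supBound Φ p K ^ p = (1 + 1 / Φ 1) * K := by
  have hp := zero_lt_one.trans_le hΦ.one_le_lower
  have h₁ := zero_le_one.trans hΦ.one_le_one_add_one_div
  rw [supBound, ← rpow_mul (mul_nonneg h₁ hK), one_div_mul_cancel hp.ne', rpow_one]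

theorem supBound_pos (hΦ : HasPowerGrowth Φ p q) (hK : 0 < K) : 0 < supBound Φ p K :=
  rpow_pos_of_pos (mul_pos (zero_lt_one.trans_le hΦ.one_le_one_add_one_div) hK) _

theorem one_le_comp_supBound (hΦ : HasPowerGrowth Φ p q) (hK : 1 ≤ K) :
    1 ≤ Φ (supBound Φ p K) := by
  have hK₀ := zero_lt_one.trans_le hK
  have hΦ₁ := hΦ.pos one_pos
  have hM : 1 ≤ supBound Φ p K := one_le_rpow
    (one_le_mul_of_one_le_of_one_le hΦ.one_le_one_add_one_div hK)
    (one_div_nonneg.2 (zero_le_one.trans hΦ.one_le_lower))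
  have := hΦ.le_rpow_mul one_pos hM
  rw [div_rpow zero_le_one (zero_le_one.trans hM), one_rpow, hΦ.supBound_rpow hK₀.le,
    one_div_mul_eq_div, le_div_iff₀ (by positivity)] at this
  refine le_trans ?_ this
  calc 1 ≤ (Φ 1 + 1) * K := one_le_mul_of_one_le_of_one_le (by linarith) hK
    _ = Φ 1 * ((1 + 1 / Φ 1) * K) := by field_simp

end HasPowerGrowth

variable {Ω E : Type*} [MeasurableSpace Ω] [NormedAddCommGroup E] [InnerProductSpace ℝ E]
  {μ : Measure Ω} {u : Ω → E} {K : ℝ} {Φ : ℝ → ℝ} {p q : ℝ} {c : E}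

namespace IsParsevalFrame

theorem abs_inner_le (hu : IsParsevalFrame μ u K) (y : Ω) (c : E) : |⟪u y, c⟫| ≤ √K * ‖c‖ :=
  (abs_real_inner_le_norm _ _).trans
    (mul_le_mul_of_nonneg_right (le_sqrt_of_sq_le (hu.norm_sq_le y)) (norm_nonneg c))

variable [IsProbabilityMeasure μ]

theorem finrank_le [FiniteDimensional ℝ E] (hu : IsParsevalFrame μ u K) : finrank ℝ E ≤ K := by
  let b := stdOrthonormalBasis ℝ E
  have : 0 ≤ K := by
    obtain ⟨y⟩ := nonempty_of_isProbabilityMeasure μ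
    exact (sq_nonneg _).trans (hu.norm_sq_le y)
  have hint (i) : Integrable (fun y => ⟪u y, b i⟫ ^ 2) μ := by
    refine Integrable.of_bound ((hu.measurable_inner _).pow_const 2).aestronglyMeasurable K
      (Filter.Eventually.of_forall fun y => ?_)
    rw [norm_of_nonneg (sq_nonneg _)]
    exact (b.sum_sq_inner_left (u y) ▸ Finset.single_le_sum (f := fun i => ⟪u y, b i⟫ ^ 2)
      (fun _ _ => sq_nonneg _) (Finset.mem_univ i)).trans (hu.norm_sq_le y)
  calc (finrank ℝ E : ℝ) = ∑ i, ∫ y, ⟪u y, b i⟫ ^ 2 ∂μ := by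
        simp [hu.integral_inner_sq, b.norm_eq_one]
    _ = ∫ y, ‖u y‖ ^ 2 ∂μ := by
        rw [← integral_finsetSum _ fun i _ => hint i]
        simp_rw [b.sum_sq_inner_left]
    _ ≤ ∫ _, K ∂μ := by
        refine integral_mono_of_nonneg (Filter.Eventually.of_forall fun y => sq_nonneg _)
          (integrable_const K) (Filter.Eventually.of_forall hu.norm_sq_le)
    _ = K := by simp

theorem one_le [FiniteDimensional ℝ E] [Nontrivial E] (hu : IsParsevalFrame μ u K) : 1 ≤ K :=
  le_trans (mod_cast finrank_pos (R := ℝ) (M := E)) hu.finrank_le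

theorem integrable_comp (hu : IsParsevalFrame μ u K) (hΦ : HasPowerGrowth Φ p q) (c : E) :
    Integrable (fun y => Φ |⟪u y, c⟫|) μ := by
  refine Integrable.of_bound
    (hΦ.measurable_comp_abs.comp (hu.measurable_inner c)).aestronglyMeasurable (Φ (√K * ‖c‖))
    (Filter.Eventually.of_forall fun y => ?_)
  rw [norm_of_nonneg (hΦ.nonneg (abs_nonneg _))]
  exact hΦ.monotoneOn (Set.mem_Ici.2 (abs_nonneg _))
    (Set.mem_Ici.2 ((abs_nonneg _).trans (hu.abs_inner_le y c))) (hu.abs_inner_le y c)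

theorem integral_abs_rpow_le (hu : IsParsevalFrame μ u K) (hΦ : HasPowerGrowth Φ p q)
    (hc : c ∈ modularBall μ u Φ) : ∫ y, |⟪u y, c⟫| ^ p ∂μ ≤ 1 + 1 / Φ 1 := by
  have hint := (hu.integrable_comp hΦ c).div_const (Φ 1)
  calc ∫ y, |⟪u y, c⟫| ^ p ∂μ ≤ ∫ y, (1 + Φ |⟪u y, c⟫| / Φ 1) ∂μ :=
        integral_mono_of_nonneg
          (Filter.Eventually.of_forall fun y => rpow_nonneg (abs_nonneg _) p)
          ((integrable_const 1).add hint) (Filter.Eventually.of_forall fun y => hΦ.rpow_abs_le _)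
    _ = 1 + (∫ y, Φ |⟪u y, c⟫| ∂μ) / Φ 1 := by
        rw [integral_add (integrable_const 1) hint, integral_div]
        simp
    _ ≤ 1 + 1 / Φ 1 := by
        have := hΦ.pos one_pos
        gcongr
        exact hc

/-- Interpolation between `L^p` and `L^∞` bounds the `L²` norm, hence the sup norm, on the modular
ball. -/
theorem sqrt_mul_norm_le_supBound (hu : IsParsevalFrame μ u K) (hΦ : HasPowerGrowth Φ p q)
    (hp : p ≤ 2) (hK : 0 < K) (hc : c ∈ modularBall μ u Φ) : √K * ‖c‖ ≤ supBound Φ p K := by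
  set s := √K * ‖c‖ with hs
  have hs₀ : 0 ≤ s := by positivity
  rcases hs₀.eq_or_lt with hs₀ | hs₀
  · exact hs₀ ▸ (hΦ.supBound_pos hK).le
  have hp₀ := zero_lt_one.trans_le hΦ.one_le_lower
  have hmeas : Measurable fun y => |⟪u y, c⟫| ^ p :=
    (measurable_norm.comp (hu.measurable_inner c)).pow_const p
  have hint : Integrable (fun y => |⟪u y, c⟫| ^ p) μ :=
    Integrable.of_bound hmeas.aestronglyMeasurable (s ^ p) (Filter.Eventually.of_forall fun y => by
      rw [norm_of_nonneg (rpow_nonneg (abs_nonneg _) p)]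
      exact rpow_le_rpow (abs_nonneg _) (hu.abs_inner_le y c) hp₀.le)
  have hnorm : ‖c‖ ^ 2 ≤ s ^ (2 - p) * (1 + 1 / Φ 1) := by
    calc ‖c‖ ^ 2 = ∫ y, |⟪u y, c⟫| ^ 2 ∂μ := by simp [hu.integral_inner_sq]
      _ ≤ ∫ y, s ^ (2 - p) * |⟪u y, c⟫| ^ p ∂μ :=
          integral_mono_of_nonneg (Filter.Eventually.of_forall fun y => sq_nonneg _)
            (hint.const_mul _) (Filter.Eventually.of_forall fun y =>
              sq_le_rpow_mul_rpow (abs_nonneg _) (hu.abs_inner_le y c) hp)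
      _ ≤ s ^ (2 - p) * (1 + 1 / Φ 1) := by
          rw [integral_const_mul]
          gcongr
          exact hu.integral_abs_rpow_le hΦ hc
  have hpow : s ^ (2 - p) * s ^ p ≤ s ^ (2 - p) * supBound Φ p K ^ p := by
    calc s ^ (2 - p) * s ^ p = K * ‖c‖ ^ 2 := by
          rw [← rpow_add hs₀, sub_add_cancel, rpow_two, hs, mul_pow, sq_sqrt hK.le]
      _ ≤ K * (s ^ (2 - p) * (1 + 1 / Φ 1)) := by gcongr
      _ = s ^ (2 - p) * supBound Φ p K ^ p := by
          rw [hΦ.supBound_rpow hK.le]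
          ring
  exact (rpow_le_rpow_iff hs₀.le (hΦ.supBound_pos hK).le hp₀).1
    (le_of_mul_le_mul_left hpow (rpow_pos_of_pos hs₀ _))

theorem abs_inner_le_supBound (hu : IsParsevalFrame μ u K) (hΦ : HasPowerGrowth Φ p q)
    (hp : p ≤ 2) (hK : 0 < K) (hc : c ∈ modularBall μ u Φ) (y : Ω) :
    |⟪u y, c⟫| ≤ supBound Φ p K :=
  (hu.abs_inner_le y c).trans (hu.sqrt_mul_norm_le_supBound hΦ hp hK hc)

end IsParsevalFrame

end Frames

/-! ### A first, long sample -/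

section FirstSample

open Module

theorem norm_sq_le_of_unit_ball {ι E : Type*} [Fintype ι]
    [NormedAddCommGroup E] [InnerProductSpace ℝ E] {v : ι → E}
    (hv : ∀ c, ‖c‖ ≤ 1 → ‖c‖ ^ 2 - 1 / 2 ≤ 𝔼 i, ⟪v i, c⟫ ^ 2) (c : E) :
    ‖c‖ ^ 2 ≤ 2 * 𝔼 i, ⟪v i, c⟫ ^ 2 := by
  rcases eq_or_ne c 0 with rfl | hc
  · simp
  have hnorm : ‖‖c‖⁻¹ • c‖ = 1 := norm_smul_inv_norm (𝕜 := ℝ) hc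
  have hunit := hv _ hnorm.le
  simp only [hnorm, real_inner_smul_right, mul_pow, ← Finset.mul_expect] at hunit
  have hc₀ : 0 < ‖c‖ ^ 2 := pow_pos (norm_pos_iff.2 hc) 2
  rw [inv_pow, inv_mul_eq_div, le_div_iff₀ hc₀] at hunit
  linarith

variable {Ω E : Type*} [MeasurableSpace Ω] [NormedAddCommGroup E] [InnerProductSpace ℝ E]
  {μ : Measure Ω} {u : Ω → E} {K : ℝ} {Φ : ℝ → ℝ} {p q : ℝ}

/-- The union bound in `IsParsevalFrame.exists_isCoarseSample`: two nets of `exp (2 * N) ^ L`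
functions with values in `[0, A]` are sampled to accuracy `δ / 4`. -/
theorem union_bound_lt_one {N A δ n : ℝ} {L : ℕ} (hN : N ≤ A) (hA : 1 ≤ A) (hδ : 0 < δ)
    (hδ₁ : δ ≤ 1) (hL : (2 : ℝ) ^ L ≤ 16 * A / δ) (hn : 300 * A ^ 4 / δ ^ 3 ≤ n) :
    2 * exp (2 * N) ^ L * (2 * exp (-(2 * n * (δ / 4) ^ 2 / A ^ 2))) < 1 := by
  have hLA : (L : ℝ) ≤ 16 * A / δ := le_trans (mod_cast (Nat.lt_two_pow_self (n := L)).le) hL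
  have hnet : L * (2 * N) ≤ 32 * A ^ 2 / δ :=
    calc L * (2 * N) ≤ L * (2 * A) := by gcongr
      _ ≤ 16 * A / δ * (2 * A) := by gcongr
      _ = 32 * A ^ 2 / δ := by ring
  have htail : 37 * A ^ 2 / δ ≤ 2 * n * (δ / 4) ^ 2 / A ^ 2 :=
    calc 37 * A ^ 2 / δ ≤ 2 * (300 * A ^ 4 / δ ^ 3) * (δ / 4) ^ 2 / A ^ 2 := by
          rw [div_le_iff₀ hδ]
          field_simp
          norm_num
      _ ≤ 2 * n * (δ / 4) ^ 2 / A ^ 2 := by gcongr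
  have hgap : 1 ≤ A ^ 2 / δ := (one_le_div hδ).2 (hδ₁.trans (one_le_pow₀ hA))
  have hlog : log 4 < 2 := by
    rw [show (4 : ℝ) = 2 ^ 2 by norm_num, log_pow]
    push_cast
    linarith [log_two_lt_d9]
  calc 2 * exp (2 * N) ^ L * (2 * exp (-(2 * n * (δ / 4) ^ 2 / A ^ 2)))
      = exp (log 4 + L * (2 * N) - 2 * n * (δ / 4) ^ 2 / A ^ 2) := by
        rw [sub_eq_add_neg, exp_add, exp_add, exp_log (by norm_num), exp_nat_mul]
        ring
    _ < 1 := by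
        rw [mul_div_assoc] at hnet htail
        exact exp_lt_one_iff.2 (by linarith)

/-- The points `x i` reproduce the modular of `Φ` up to `δ` on the modular ball, and the `L²` norm
up to a factor from below. -/
structure IsCoarseSample {Ω E ι : Type*} [MeasurableSpace Ω] [NormedAddCommGroup E]
    [InnerProductSpace ℝ E] [Fintype ι] (μ : Measure Ω) (u : Ω → E) (Φ : ℝ → ℝ) (δ : ℝ)
    (x : ι → Ω) : Prop where
  abs_sub_le : ∀ c ∈ modularBall μ u Φ,
    |𝔼 i, Φ |⟪u (x i), c⟫| - ∫ y, Φ |⟪u y, c⟫| ∂μ| ≤ δ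
  norm_sq_le : ∀ c, ‖c‖ ^ 2 ≤ 2 * 𝔼 i, ⟪u (x i), c⟫ ^ 2

/-- The functions on which empirical means have to be close to integrals for a coarse sample. -/
def coarseTests {Ω E : Type*} [MeasurableSpace Ω] [NormedAddCommGroup E] [InnerProductSpace ℝ E]
    (μ : Measure Ω) (u : Ω → E) (Φ : ℝ → ℝ) : Set (Ω → ℝ) :=
  (fun c y => Φ |⟪u y, c⟫|) '' modularBall μ u Φ ∪ (fun c y => ⟪u y, c⟫ ^ 2) '' {c | ‖c‖ ≤ 1}

namespace IsParsevalFrame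

theorem isCoarseSample_of_coarseTests {ι : Type*} [Fintype ι] {x : ι → Ω} {δ : ℝ}
    (hu : IsParsevalFrame μ u K) (hδ : δ ≤ 1 / 2)
    (hx : ∀ f ∈ coarseTests μ u Φ, |𝔼 i, f (x i) - ∫ y, f y ∂μ| ≤ δ) :
    IsCoarseSample μ u Φ δ x := by
  refine ⟨fun c hc => hx _ (.inl ⟨c, hc, rfl⟩), norm_sq_le_of_unit_ball fun c hc => ?_⟩
  have := (abs_le.1 (hx _ (.inr ⟨c, hc, rfl⟩))).1
  rw [hu.integral_inner_sq] at this
  linarith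

theorem exists_net_comp [FiniteDimensional ℝ E] (hu : IsParsevalFrame μ u K)
    (hΦ : HasPowerGrowth Φ p q) (hK : 0 < K) {F : Set E} (h₀ : 0 ∈ F) {M : ℝ} (hM : 0 < M)
    (hF : ∀ c ∈ F, √K * ‖c‖ ≤ M) (L : ℕ) :
    ∃ G : Finset (Ω → ℝ), (#G : ℝ) ≤ exp (2 * finrank ℝ E) ^ L ∧ (∀ g ∈ G, Measurable g) ∧
      (∀ g ∈ G, ∀ y, g y ∈ Set.Icc 0 (Φ M)) ∧
      ∀ c ∈ F, ∃ g ∈ G, ∀ y, |(Φ |⟪u y, c⟫|) - g y| ≤ q * Φ M / 2 ^ L := by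
  classical
  have hsK : 0 < √K := sqrt_pos.2 hK
  have hF_inner (c) (hc : c ∈ F) (y : Ω) : |⟪u y, c⟫| ≤ M := (hu.abs_inner_le y c).trans (hF c hc)
  obtain ⟨T, hTF, hTcard, hTnet⟩ := exists_net_of_norm_le h₀ (div_pos hM hsK)
    (fun c hc => (le_div_iff₀' hsK).2 (hF c hc)) L
  refine ⟨T.image fun c y => Φ |⟪u y, c⟫|, ?_, ?_, ?_, fun c hc => ?_⟩
  · exact le_trans (mod_cast Finset.card_image_le) hTcard
  · simp only [Finset.forall_mem_image]
    exact fun c _ => hΦ.measurable_comp_abs.comp (hu.measurable_inner c)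
  · simp only [Finset.forall_mem_image]
    exact fun c hc y => ⟨hΦ.nonneg (abs_nonneg _), hΦ.monotoneOn (Set.mem_Ici.2 (abs_nonneg _))
      (Set.mem_Ici.2 hM.le) (hF_inner c (hTF hc) y)⟩
  · obtain ⟨c', hc'T, hcc'⟩ := hTnet c hc
    refine ⟨_, Finset.mem_image_of_mem _ hc'T, fun y => ?_⟩
    calc |(Φ |⟪u y, c⟫|) - (Φ |⟪u y, c'⟫|)| ≤ q * Φ M / M * |⟪u y, c⟫ - ⟪u y, c'⟫| :=
          hΦ.abs_comp_abs_sub_le (hF_inner c hc y) (hF_inner c' (hTF hc'T) y)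
      _ ≤ q * Φ M / M * (√K * (M / √K / 2 ^ L)) := by
          have := hΦ.one_le_upper
          have := hΦ.nonneg hM.le
          rw [← inner_sub_right]
          gcongr
          exact (hu.abs_inner_le y _).trans (by gcongr)
      _ = q * Φ M / 2 ^ L := by field_simp

variable [IsProbabilityMeasure μ]

theorem integrable_of_mem_coarseTests (hu : IsParsevalFrame μ u K) (hΦ : HasPowerGrowth Φ p q)
    {f : Ω → ℝ} (hf : f ∈ coarseTests μ u Φ) : Integrable f μ := by
  rcases hf with ⟨c, -, rfl⟩ | ⟨c, -, rfl⟩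
  · exact hu.integrable_comp hΦ c
  · simpa only [sq_abs] using hu.integrable_comp hasPowerGrowth_sq c

theorem exists_net_coarseTests [FiniteDimensional ℝ E] [Nontrivial E]
    (hu : IsParsevalFrame μ u K) (hΦ : HasPowerGrowth Φ p q) (hp : p ≤ 2) {A : ℝ}
    (hA : q * Φ (supBound Φ p K) ≤ A) (hKA : 2 * K ≤ A) (L : ℕ) :
    ∃ G : Finset (Ω → ℝ), (#G : ℝ) ≤ 2 * exp (2 * finrank ℝ E) ^ L ∧ (∀ g ∈ G, Measurable g) ∧
      (∀ g ∈ G, ∀ y, g y ∈ Set.Icc 0 A) ∧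
      ∀ f ∈ coarseTests μ u Φ, ∃ g ∈ G, ∀ y, |f y - g y| ≤ A / 2 ^ L := by
  classical
  have hK := hu.one_le
  have hK₀ := zero_lt_one.trans_le hK
  have hΦA : Φ (supBound Φ p K) ≤ A := hA.trans' <|
    le_mul_of_one_le_left (hΦ.pos (hΦ.supBound_pos hK₀)).le hΦ.one_le_upper
  obtain ⟨G₁, hG₁card, hG₁meas, hG₁Icc, hG₁net⟩ := hu.exists_net_comp hΦ hK₀
    (F := modularBall μ u Φ) (by simp [modularBall, hΦ.map_zero]) (hΦ.supBound_pos hK₀)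
    (fun c hc => hu.sqrt_mul_norm_le_supBound hΦ hp hK₀ hc) L
  obtain ⟨G₂, hG₂card, hG₂meas, hG₂Icc, hG₂net⟩ := hu.exists_net_comp hasPowerGrowth_sq hK₀
    (F := {c | ‖c‖ ≤ 1}) (by simp) (sqrt_pos.2 hK₀)
    (fun c hc => mul_le_of_le_one_right (sqrt_nonneg _) hc) L
  simp only [sq_sqrt hK₀.le, sq_abs] at hG₂Icc hG₂net
  refine ⟨G₁ ∪ G₂, ?_, ?_, ?_, ?_⟩
  · have : (#(G₁ ∪ G₂) : ℝ) ≤ #G₁ + #G₂ := mod_cast Finset.card_union_le G₁ G₂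
    linarith
  · exact fun g hg => (Finset.mem_union.1 hg).elim (hG₁meas g) (hG₂meas g)
  · exact fun g hg y => (Finset.mem_union.1 hg).elim
      (fun hg => Set.Icc_subset_Icc_right hΦA (hG₁Icc g hg y))
      (fun hg => Set.Icc_subset_Icc_right (by linarith) (hG₂Icc g hg y))
  · rintro f (⟨c, hc, rfl⟩ | ⟨c, hc, rfl⟩)
    · obtain ⟨g, hg, hcg⟩ := hG₁net c hc
      exact ⟨g, Finset.mem_union_left _ hg, fun y => (hcg y).trans (by gcongr)⟩
    · obtain ⟨g, hg, hcg⟩ := hG₂net c hc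
      exact ⟨g, Finset.mem_union_right _ hg, fun y => (hcg y).trans (by gcongr)⟩

/-- Hoeffding's inequality for the independent points, with a union bound over nets of the modular
ball and of the Euclidean unit ball. -/
theorem exists_isCoarseSample {ι : Type*} [Fintype ι] [FiniteDimensional ℝ E] [Nontrivial E]
    (hu : IsParsevalFrame μ u K) (hΦ : HasPowerGrowth Φ p q) (hp : p ≤ 2) {A δ : ℝ}
    (hA : q * Φ (supBound Φ p K) ≤ A) (hKA : 2 * K ≤ A) (hδ : 0 < δ) (hδ₁ : δ ≤ 1)
    (hn : 300 * A ^ 4 / δ ^ 3 ≤ Fintype.card ι) :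
    ∃ x : ι → Ω, IsCoarseSample μ u Φ (δ / 2) x := by
  have hK := hu.one_le
  have hA₁ : 1 ≤ A := by linarith
  have hι : Nonempty ι := Fintype.card_pos_iff.1 <| by
    exact_mod_cast lt_of_lt_of_le (by positivity : 0 < 300 * A ^ 4 / δ ^ 3) hn
  obtain ⟨L, hL, hL'⟩ := exists_nat_pow_near (y := 2) ((one_le_div hδ).2 (by linarith) :
    1 ≤ 16 * A / δ) one_lt_two
  obtain ⟨G, hGcard, hGmeas, hGIcc, hGnet⟩ := hu.exists_net_coarseTests hΦ hp hA hKA L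
  have hτ : A / 2 ^ L ≤ δ / 8 := by
    rw [pow_succ, div_lt_iff₀ hδ] at hL'
    rw [div_le_iff₀ (by positivity)]
    linarith
  have hunion := union_bound_lt_one (hu.finrank_le.trans (by linarith)) hA₁ hδ hδ₁ hL hn
  obtain ⟨x, hx⟩ := exists_sample_of_net (ι := ι) (η := δ / 4)
    (fun f hf => hu.integrable_of_mem_coarseTests hΦ hf) hGmeas hGIcc hGnet
    (zero_lt_one.trans_le hA₁) (by positivity)
    (by rw [sub_zero]; exact hunion.trans_le' (by gcongr))
  exact ⟨x, hu.isCoarseSample_of_coarseTests (by linarith) fun f hf =>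
    (hx f hf).trans (by linarith)⟩

end IsParsevalFrame

end FirstSample

/-! ### Thinning the sample -/

section Thinning

variable {Ω E ι : Type*} [MeasurableSpace Ω] [NormedAddCommGroup E] [InnerProductSpace ℝ E]
  {μ : Measure Ω} {u : Ω → E} {K M s δ : ℝ} {Φ : ℝ → ℝ} {p q : ℝ} {c c' g : E}

theorem HasPowerGrowth.sq_comp_abs_sub_le_of_le_div_two_pow (hΦ : HasPowerGrowth Φ p q)
    (hp : p ≤ 2) (hM : 0 < M) {s t : ℝ} (hs : |s| ≤ M) (ht : |t| ≤ M) {k : ℕ}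
    (hst : |s - t| ≤ M / 2 ^ k) :
    ((Φ |s|) - (Φ |t|)) ^ 2 ≤ (q * √(Φ M) / √((2 ^ p) ^ k)) ^ 2 * (Φ |s| + Φ |t|) := by
  have hratio : (|s - t| / M) ^ p ≤ 1 / (2 ^ p) ^ k :=
    calc (|s - t| / M) ^ p ≤ (1 / 2 ^ k) ^ p := by
          refine rpow_le_rpow (by positivity) ?_ (zero_le_one.trans hΦ.one_le_lower)
          rwa [div_le_iff₀ hM, one_div_mul_eq_div]
      _ = 1 / (2 ^ p) ^ k := by
          rw [div_rpow zero_le_one (by positivity), one_rpow, rpow_pow_comm zero_le_two]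
  have hΦst : 0 ≤ Φ |s| + Φ |t| := add_nonneg (hΦ.nonneg (abs_nonneg _)) (hΦ.nonneg (abs_nonneg _))
  have hΦM := hΦ.pos hM
  calc ((Φ |s|) - (Φ |t|)) ^ 2 ≤ q ^ 2 * Φ M * (|s - t| / M) ^ p * (Φ |s| + Φ |t|) :=
        hΦ.sq_comp_abs_sub_le hp hs ht
    _ ≤ q ^ 2 * Φ M * (1 / (2 ^ p) ^ k) * (Φ |s| + Φ |t|) := by gcongr
    _ = (q * √(Φ M) / √((2 ^ p) ^ k)) ^ 2 * (Φ |s| + Φ |t|) := by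
        rw [div_pow, mul_pow, sq_sqrt hΦM.le, sq_sqrt (by positivity), mul_one_div]

namespace IsCoarseSample

variable [Fintype ι] {x : ι → Ω}

theorem expect_comp_le (hx : IsCoarseSample μ u Φ δ x) (hc : c ∈ modularBall μ u Φ) :
    𝔼 i, Φ |⟪u (x i), c⟫| ≤ 1 + δ := by
  have := (abs_le.1 (hx.abs_sub_le c hc)).2
  have : ∫ y, Φ |⟪u y, c⟫| ∂μ ≤ 1 := hc
  linarith

variable [Nonempty ι]

theorem expect_abs_rpow_le (hx : IsCoarseSample μ u Φ δ x) (hΦ : HasPowerGrowth Φ p q)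
    (hδ : δ ≤ 1) (hc : c ∈ modularBall μ u Φ) :
    𝔼 i, |⟪u (x i), c⟫| ^ p ≤ 2 * (1 + 1 / Φ 1) := by
  have hΦ₁ := hΦ.pos one_pos
  calc 𝔼 i, |⟪u (x i), c⟫| ^ p ≤ 𝔼 i, (1 + Φ |⟪u (x i), c⟫| / Φ 1) :=
        Finset.expect_le_expect fun i _ => hΦ.rpow_abs_le _
    _ = 1 + (𝔼 i, Φ |⟪u (x i), c⟫|) / Φ 1 := by
        rw [Finset.expect_add_distrib, Fintype.expect_const, Finset.expect_div]
    _ ≤ 1 + 2 / Φ 1 := by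
        gcongr
        linarith [hx.expect_comp_le hc]
    _ ≤ 2 * (1 + 1 / Φ 1) := by
        rw [mul_add, mul_one_div]
        linarith

theorem norm_sub_sq_le (hx : IsCoarseSample μ u Φ δ x) (hΦ : HasPowerGrowth Φ p q) (hp : p ≤ 2)
    (hδ : δ ≤ 1) (hc : c ∈ modularBall μ u Φ) (hc' : c' ∈ modularBall μ u Φ) (hs : 0 ≤ s)
    (hcc' : ∀ i, |⟪u (x i), c - c'⟫| ≤ s) : ‖c - c'‖ ^ 2 ≤ 16 * (1 + 1 / Φ 1) * s ^ (2 - p) := by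
  have hpoint (i) : ⟪u (x i), c - c'⟫ ^ 2 ≤
      s ^ (2 - p) * (2 * (|⟪u (x i), c⟫| ^ p + |⟪u (x i), c'⟫| ^ p)) := by
    rw [← sq_abs]
    refine (sq_le_rpow_mul_rpow (abs_nonneg _) (hcc' i) hp).trans ?_
    gcongr
    rw [inner_sub_right]
    exact abs_sub_rpow_le hΦ.one_le_lower hp _ _
  have hexpect : 𝔼 i, ⟪u (x i), c - c'⟫ ^ 2 ≤
      s ^ (2 - p) * (2 * (2 * (1 + 1 / Φ 1) + 2 * (1 + 1 / Φ 1))) := by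
    refine (Finset.expect_le_expect fun i _ => hpoint i).trans ?_
    rw [← Finset.mul_expect, ← Finset.mul_expect, Finset.expect_add_distrib]
    gcongr
    · exact hx.expect_abs_rpow_le hΦ hδ hc
    · exact hx.expect_abs_rpow_le hΦ hδ hc'
  linarith [hx.norm_sq_le (c - c')]

variable [FiniteDimensional ℝ E]

theorem card_le_of_separated (hx : IsCoarseSample μ u Φ δ x) (hu : IsParsevalFrame μ u K)
    (hK : 0 < K) (hΦ : HasPowerGrowth Φ p q) (hp : p ≤ 2) (hδ : δ ≤ 1)
    (hg : g ∈ modularBall μ u Φ) (hs : 0 < s) {T : Finset E}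
    (hT : ∀ h ∈ T, h ∈ modularBall μ u Φ ∧ ∀ i, |⟪u (x i), h - g⟫| ≤ s)
    (hsep : (T : Set E).Pairwise fun f h => ¬ ∀ i, |⟪u (x i), f - h⟫| ≤ s / 2) :
    (#T : ℝ) ≤ 2 * exp (256 * K * (1 + 1 / Φ 1) * log (4 * Fintype.card ι) / s ^ p) := by
  classical
  have hcard := card_le_of_abs_inner_separated (v := fun i => u (x i)) hK
    (fun i => hu.norm_sq_le (x i)) (T := T.image fun h => h - g)
    (Finset.forall_mem_image.2 fun h hh =>
      hx.norm_sub_sq_le hΦ hp hδ (hT h hh).1 hg hs.le (hT h hh).2) hs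
    (by
      simp only [Finset.forall_mem_image, sub_sub_sub_cancel_right, ne_eq, sub_left_inj]
      exact fun f hf h hh hne => by simpa using hsep hf hh hne)
  rw [Finset.card_image_of_injective _ sub_left_injective] at hcard
  refine hcard.trans_eq ?_
  rw [rpow_sub hs, rpow_two]
  congr 2
  field_simp
  ring

theorem exists_net (hx : IsCoarseSample μ u Φ δ x) (hu : IsParsevalFrame μ u K) (hK : 0 < K)
    (hΦ : HasPowerGrowth Φ p q) (hp : p ≤ 2) (hδ : δ ≤ 1) (hg : g ∈ modularBall μ u Φ) (k : ℕ) :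
    ∃ T : Finset E, (T : Set E) ⊆ modularBall μ u Φ ∧
      (#T : ℝ) ≤ exp (log 2 + 256 * log (4 * Fintype.card ι) * (2 ^ p) ^ k) ∧
      (∀ h ∈ T, ∀ i, |⟪u (x i), h - g⟫| ≤ supBound Φ p K / 2 ^ k) ∧
      ∀ f ∈ modularBall μ u Φ, (∀ i, |⟪u (x i), f - g⟫| ≤ supBound Φ p K / 2 ^ k) →
        ∃ h ∈ T, ∀ i, |⟪u (x i), f - h⟫| ≤ supBound Φ p K / 2 ^ (k + 1) := by
  have hM := hΦ.supBound_pos hK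
  have hs : 0 < supBound Φ p K / 2 ^ k := by positivity
  have hsp : (supBound Φ p K / 2 ^ k) ^ p = (1 + 1 / Φ 1) * K / (2 ^ p) ^ k := by
    rw [div_rpow hM.le (by positivity), hΦ.supBound_rpow hK.le, rpow_pow_comm zero_le_two]
  obtain ⟨T, hTG, hTcard, hTnet⟩ := exists_net_of_card_separated_le
    (G := {f | f ∈ modularBall μ u Φ ∧ ∀ i, |⟪u (x i), f - g⟫| ≤ supBound Φ p K / 2 ^ k})
    (R := fun f h => ∀ i, |⟪u (x i), f - h⟫| ≤ supBound Φ p K / 2 ^ k / 2)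
    (fun f i => by
      rw [sub_self, inner_zero_right, abs_zero]
      positivity)
    (fun f h hfh i => by
      rw [← neg_sub, inner_neg_right, abs_neg]
      exact hfh i)
    (fun T hT hsep => hx.card_le_of_separated hu hK hΦ hp hδ hg hs (fun h hh => hT hh) hsep)
  refine ⟨T, fun h hh => (hTG hh).1, hTcard.trans_eq ?_, fun h hh => (hTG hh).2,
    fun f hf hfg => ?_⟩
  · have := hΦ.pos one_pos
    rw [exp_add, exp_log two_pos, hsp]
    congr 2
    field_simp
  · obtain ⟨h, hh, hfh⟩ := hTnet f ⟨hf, hfg⟩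
    exact ⟨h, hh, fun i => by simpa only [pow_succ, div_div] using hfh i⟩

variable [IsProbabilityMeasure μ]

/-- The functions `Φ |⟪u (x i), c⟫|` on the sample, with the dyadic scales of the distance
`max i, |⟪u (x i), c - c'⟫|`. The entropy estimate comes from the dual Sudakov inequality. -/
noncomputable def chainingFamily (hx : IsCoarseSample μ u Φ δ x) (hu : IsParsevalFrame μ u K)
    (hK : 0 < K) (hΦ : HasPowerGrowth Φ p q) (hp : p ≤ 2) (hδ : δ ≤ 1) : ChainingFamily ι E where
  F := modularBall μ u Φ
  φ c i := Φ |⟪u (x i), c⟫|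
  rel k c c' := ∀ i, |⟪u (x i), c - c'⟫| ≤ supBound Φ p K / 2 ^ k
  width k := q * √(Φ (supBound Φ p K)) / √((2 ^ p) ^ k)
  entropy k := log 2 + 256 * log (4 * Fintype.card ι) * (2 ^ p) ^ k
  root := 0
  width_nonneg k := by
    have := hΦ.one_le_upper
    positivity
  root_mem := by simp [modularBall, hΦ.map_zero]
  φ_root i := by simp [hΦ.map_zero]
  rel_root c hc i := by
    simpa using hu.abs_inner_le_supBound hΦ hp hK hc (x i)
  sq_sub_le k c hc c' hc' hcc' i :=
    hΦ.sq_comp_abs_sub_le_of_le_div_two_pow hp (hΦ.supBound_pos hK)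
      (hu.abs_inner_le_supBound hΦ hp hK hc (x i)) (hu.abs_inner_le_supBound hΦ hp hK hc' (x i))
      (by simpa only [inner_sub_right] using hcc' i)
  exists_net k g hg := hx.exists_net hu hK hΦ hp hδ hg k

end IsCoarseSample

end Thinning

section ThinningBound

namespace ChainingFamily

variable {V E : Type*} {D : ChainingFamily V E} {b l Q : ℝ}

theorem threshold_le (hb : 2 ≤ b) (hl : 1 ≤ l)
    (hentropy : ∀ k, D.entropy k ≤ log 2 + 256 * l * b ^ k) (k : ℕ) :
    D.threshold k ≤ 33 * √l * √(b ^ k) := by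
  have hgeom : ∑ i ∈ Finset.range (k + 1), b ^ i ≤ 2 * b ^ k := by
    rw [geom_sum_eq (by linarith), div_le_iff₀ (by linarith), pow_succ]
    nlinarith [pow_pos (by linarith : 0 < b) k]
  have hk : (k : ℝ) + 1 ≤ b ^ k :=
    calc (k : ℝ) + 1 ≤ 2 ^ k := mod_cast Nat.lt_two_pow_self
      _ ≤ b ^ k := by gcongr
  have hbl : b ^ k ≤ l * b ^ k := le_mul_of_one_le_left (by positivity) hl
  have hlog := mul_le_mul_of_nonneg_left log_two_lt_d9.le (by positivity : (0 : ℝ) ≤ k + 1)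
  have hsum : ∑ i ∈ Finset.range (k + 1), D.entropy i ≤ (k + 1) * log 2 + 512 * l * b ^ k :=
    calc ∑ i ∈ Finset.range (k + 1), D.entropy i
        ≤ ∑ i ∈ Finset.range (k + 1), (log 2 + 256 * l * b ^ i) :=
          Finset.sum_le_sum fun i _ => hentropy i
      _ = (k + 1) * log 2 + 256 * l * ∑ i ∈ Finset.range (k + 1), b ^ i := by
          simp [Finset.sum_add_distrib, Finset.mul_sum]
      _ ≤ (k + 1) * log 2 + 256 * l * (2 * b ^ k) := by gcongr
      _ = (k + 1) * log 2 + 512 * l * b ^ k := by ring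
  rw [threshold, sqrt_le_left (by positivity), mul_pow, mul_pow, sq_sqrt (by positivity),
    sq_sqrt (by positivity)]
  have : (0 : ℝ) ≤ k := by positivity
  linarith

theorem chainBound_two_pow_le (hb : 2 ≤ b) (hl : 1 ≤ l) (hQ : 0 ≤ Q)
    (hentropy : ∀ k, D.entropy k ≤ log 2 + 256 * l * b ^ k)
    (hwidth : ∀ k, D.width k ≤ Q / √(b ^ k)) (j : ℕ) :
    D.chainBound j (2 ^ j) ≤ 34 * (j + 1) * √l * Q := by
  have hlink (k : ℕ) : D.threshold k * D.width k ≤ 33 * √l * Q :=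
    calc D.threshold k * D.width k ≤ 33 * √l * √(b ^ k) * (Q / √(b ^ k)) :=
          mul_le_mul (threshold_le hb hl hentropy k) (hwidth k) (D.width_nonneg k) (by positivity)
      _ = 33 * √l * Q := by
          have : √(b ^ k) ≠ 0 := (sqrt_pos.2 (by positivity)).ne'
          field_simp
  have hrest : √((2 ^ j : ℕ) : ℝ) * D.width j ≤ Q :=
    calc √((2 ^ j : ℕ) : ℝ) * D.width j ≤ √(b ^ j) * (Q / √(b ^ j)) :=
          mul_le_mul (sqrt_le_sqrt (by push_cast; gcongr)) (hwidth j) (D.width_nonneg j)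
            (sqrt_nonneg _)
      _ = Q := mul_div_cancel₀ _ (sqrt_pos.2 (by positivity)).ne'
  have hQl : Q ≤ √l * Q := le_mul_of_one_le_left hQ (one_le_sqrt.2 hl)
  calc D.chainBound j (2 ^ j) ≤ ∑ k ∈ Finset.range j, 33 * √l * Q + Q :=
        add_le_add (Finset.sum_le_sum fun k _ => hlink k) hrest
    _ ≤ 34 * (j + 1) * √l * Q := by
        rw [Finset.sum_const, Finset.card_range, nsmul_eq_mul]
        have : 0 ≤ j * (√l * Q) := by positivity
        linarith

end ChainingFamily

variable {Ω E ι : Type*} [MeasurableSpace Ω] [NormedAddCommGroup E] [InnerProductSpace ℝ E]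
  [FiniteDimensional ℝ E] {μ : Measure Ω} [IsProbabilityMeasure μ] {u : Ω → E} {K δ : ℝ}
  {Φ : ℝ → ℝ} {p q : ℝ}

namespace IsCoarseSample

theorem chainBound_chainingFamily_le [Fintype ι] [Nonempty ι] {x : ι → Ω}
    (hx : IsCoarseSample μ u Φ δ x) (hu : IsParsevalFrame μ u K) (hK : 0 < K)
    (hΦ : HasPowerGrowth Φ p q) (hp : p ≤ 2) (hδ : δ ≤ 1) (j : ℕ) :
    (hx.chainingFamily hu hK hΦ hp hδ).chainBound j (2 ^ j) ≤
      34 * (j + 1) * √(log (4 * Fintype.card ι)) * (q * √(Φ (supBound Φ p K))) := by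
  have hl : 1 ≤ log (4 * Fintype.card ι) := by
    have : (1 : ℝ) ≤ Fintype.card ι := mod_cast Fintype.card_pos
    rw [le_log_iff_exp_le (by positivity)]
    linarith [exp_one_lt_d9]
  have hq := hΦ.one_le_upper
  exact ChainingFamily.chainBound_two_pow_le
    (self_le_rpow_of_one_le one_le_two hΦ.one_le_lower) hl (by positivity)
    (fun k => le_rfl) (fun k => le_rfl) j

theorem exists_thinning {J₀ : ℕ} {x : Fin (2 ^ J₀) → Ω}
    (hx : IsCoarseSample μ u Φ (δ / 2) x) (hu : IsParsevalFrame μ u K) (hK : 0 < K)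
    (hΦ : HasPowerGrowth Φ p q) (hp : p ≤ 2) (hδ : δ ≤ 1) {J : ℕ} (hJ : J ≤ J₀)
    (hbound : 7 * (34 * (J₀ + 1) * √(log (4 * (2 ^ J₀ : ℕ))) * (q * √(Φ (supBound Φ p K)))) /
      √(2 ^ J) ≤ δ / 2) :
    ∃ y : Fin (2 ^ J) → Ω, ∀ c ∈ modularBall μ u Φ,
      |𝔼 i, Φ |⟪u (y i), c⟫| - ∫ y, Φ |⟪u y, c⟫| ∂μ| ≤ δ := by
  have hq := hΦ.one_le_upper
  have hchain (j) (hj : j < J₀) :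
      ∃ L, (hx.chainingFamily hu hK hΦ hp (by linarith)).chainBound L (2 ^ j) ≤
        34 * (J₀ + 1) * √(log (4 * (2 ^ J₀ : ℕ))) * (q * √(Φ (supBound Φ p K))) := by
    refine ⟨j, (hx.chainBound_chainingFamily_le hu hK hΦ hp (by linarith) j).trans ?_⟩
    rw [Fintype.card_fin]
    gcongr
  obtain ⟨y, hy⟩ := ChainingFamily.exists_subsample (x := id) (by positivity)
    (fun c hc => (hx.expect_comp_le hc).trans (by linarith)) hchain hJ (hbound.trans (by linarith))
  refine ⟨x ∘ y, fun c hc => ?_⟩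
  have hthin : |(𝔼 i, Φ |⟪u (x (y i)), c⟫|) - (𝔼 i, Φ |⟪u (x i), c⟫|)| ≤ δ / 2 :=
    (hy c hc).trans hbound
  exact (_root_.abs_sub_le _ _ _).trans
    ((add_le_add hthin (hx.abs_sub_le c hc)).trans_eq (add_halves δ))

end IsCoarseSample

end ThinningBound

/-! ### Sample sizes -/

section SampleSize

variable {Φ : ℝ → ℝ} {p q K δ : ℝ}

theorem exists_two_pow_mem_Icc {X : ℝ} (hX : 1 ≤ X) : ∃ j : ℕ, X ≤ 2 ^ j ∧ 2 ^ j ≤ 2 * X := by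
  obtain ⟨n, hn, hn'⟩ := exists_nat_pow_near hX one_lt_two
  exact ⟨n + 1, hn'.le, by rw [pow_succ]; linarith⟩

theorem add_two_le_mul_logb {c a : ℝ} (hc : 0 < c) (ha : 0 ≤ a) (hK : 1 ≤ K) {j : ℕ}
    (hj : 2 ^ j ≤ c * K ^ a) : (j : ℝ) + 2 ≤ (|logb 2 c| + a + 2) * logb 2 (2 * K) := by
  have hK₀ := one_pos.trans_le hK
  have hlogK : 0 ≤ logb 2 K := logb_nonneg one_lt_two hK
  have hj' : (j : ℝ) ≤ logb 2 c + a * logb 2 K := by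
    have := logb_le_logb_of_le one_lt_two (by positivity) hj
    rwa [logb_pow, logb_self_eq_one one_lt_two, mul_one, logb_mul hc.ne' (by positivity),
      logb_rpow_eq_mul_logb_of_pos hK₀] at this
  rw [logb_mul two_ne_zero hK₀.ne', logb_self_eq_one one_lt_two]
  have := le_abs_self (logb 2 c)
  have : 0 ≤ (|logb 2 c| + 2) * logb 2 K := by positivity
  linarith

namespace HasPowerGrowth

theorem comp_supBound_le (hΦ : HasPowerGrowth Φ p q) (hK : 1 ≤ K) :
    Φ (supBound Φ p K) ≤ ((1 + 1 / Φ 1) ^ (1 / p)) ^ q * Φ (K ^ (1 / p)) := by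
  have hc := hΦ.one_le_one_add_one_div
  have hp := one_div_nonneg.2 (zero_le_one.trans hΦ.one_le_lower)
  have hK₀ := zero_le_one.trans hK
  have hl : 1 ≤ (1 + 1 / Φ 1) ^ (1 / p) := one_le_rpow hc hp
  have := hΦ.le_rpow_mul_comp_div (hΦ.supBound_pos (one_pos.trans_le hK)).le hl
  rwa [supBound, mul_rpow (zero_le_one.trans hc) hK₀,
    mul_div_cancel_left₀ _ (one_pos.trans_le hl).ne', ← mul_rpow (zero_le_one.trans hc) hK₀] at this

theorem comp_rpow_le (hΦ : HasPowerGrowth Φ p q) (hK : 1 ≤ K) :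
    Φ (K ^ (1 / p)) ≤ K ^ q * Φ 1 := by
  have hp := one_pos.trans_le hΦ.one_le_lower
  have hKp : K ^ (1 / p) ≤ K := rpow_le_self_of_one_le hK ((div_le_one hp).2 hΦ.one_le_lower)
  have hK₀ := one_pos.trans_le hK
  refine (hΦ.monotoneOn (rpow_nonneg hK₀.le _) hK₀.le hKp).trans ?_
  simpa only [div_self hK₀.ne'] using hΦ.le_rpow_mul_comp_div hK₀.le hK

theorem exists_coarse_sample_size (hΦ : HasPowerGrowth Φ p q) (hδ : 0 < δ) (hδ₁ : δ ≤ 1) :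
    ∃ c, 0 < c ∧ ∀ K, 1 ≤ K → ∃ J₀ : ℕ,
      300 * (2 * q * Φ (supBound Φ p K) * K) ^ 4 / δ ^ 3 ≤ 2 ^ J₀ ∧
        (J₀ : ℝ) + 2 ≤ c * logb 2 (2 * K) := by
  have hq := hΦ.one_le_upper
  have hΦ₁ := hΦ.pos one_pos
  set c₁ := ((1 + 1 / Φ 1) ^ (1 / p)) ^ q
  have : 0 < c₁ := by positivity
  refine ⟨|logb 2 (600 * (2 * q * (c₁ * Φ 1)) ^ 4 / δ ^ 3)| + (q + 1) * 4 + 2, by positivity,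
    fun K hK => ?_⟩
  have hK₀ := one_pos.trans_le hK
  have hA : 1 ≤ 2 * q * Φ (supBound Φ p K) * K :=
    one_le_mul_of_one_le_of_one_le
      (one_le_mul_of_one_le_of_one_le (by linarith) (hΦ.one_le_comp_supBound hK)) hK
  obtain ⟨J₀, hJ₀, hJ₀'⟩ := exists_two_pow_mem_Icc
    (X := 300 * (2 * q * Φ (supBound Φ p K) * K) ^ 4 / δ ^ 3) <| by
      rw [one_le_div (by positivity)]
      linarith [one_le_pow₀ hA (n := 4), pow_le_one₀ hδ.le hδ₁ (n := 3)]
  refine ⟨J₀, hJ₀, add_two_le_mul_logb (by positivity) (by positivity) hK (hJ₀'.trans ?_)⟩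
  have hΦK : Φ (supBound Φ p K) ≤ c₁ * (K ^ q * Φ 1) :=
    (hΦ.comp_supBound_le hK).trans (by gcongr; exact hΦ.comp_rpow_le hK)
  have := hΦ.pos (hΦ.supBound_pos hK₀)
  calc 2 * (300 * (2 * q * Φ (supBound Φ p K) * K) ^ 4 / δ ^ 3)
      ≤ 2 * (300 * (2 * q * (c₁ * (K ^ q * Φ 1)) * K) ^ 4 / δ ^ 3) := by gcongr
    _ = 600 * (2 * q * (c₁ * Φ 1)) ^ 4 / δ ^ 3 * K ^ ((q + 1) * 4) := by
        rw [show (4 : ℝ) = (4 : ℕ) by norm_num, rpow_mul_natCast hK₀.le, rpow_add_one hK₀.ne']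
        ring

end HasPowerGrowth

theorem log_four_mul_two_pow_le (j : ℕ) : log (4 * (2 ^ j : ℕ)) ≤ j + 2 := by
  have : (4 * (2 ^ j : ℕ) : ℝ) = 2 ^ (j + 2) := by
    push_cast
    ring
  rw [this, log_pow]
  push_cast
  exact mul_le_of_le_one_right (by positivity) (log_two_lt_d9.le.trans (by norm_num))

theorem exists_thinned_sample_size {P : ℝ} (hq : 1 ≤ q) (hδ : 0 < δ) (hδ₁ : δ ≤ 1) (hP : 1 ≤ P)
    (J₀ : ℕ) : ∃ J : ℕ,
      7 * (34 * (J₀ + 1) * √(log (4 * (2 ^ J₀ : ℕ))) * (q * √P)) / √(2 ^ J) ≤ δ / 2 ∧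
        2 ^ J ≤ 2 * ((476 * q / δ) ^ 2 * ((J₀ + 2) ^ 3 * P)) := by
  have : (0 : ℝ) ≤ J₀ := J₀.cast_nonneg
  have hqδ : 1 ≤ 476 * q / δ := by
    rw [one_le_div hδ]
    linarith
  obtain ⟨J, hJ, hJ'⟩ := exists_two_pow_mem_Icc (X := (476 * q / δ) ^ 2 * ((J₀ + 2) ^ 3 * P)) <|
    one_le_mul_of_one_le_of_one_le (one_le_pow₀ hqδ)
      (one_le_mul_of_one_le_of_one_le (one_le_pow₀ (by linarith)) hP)
  refine ⟨J, ?_, hJ'⟩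
  rw [div_le_iff₀ (by positivity)]
  calc 7 * (34 * (J₀ + 1) * √(log (4 * (2 ^ J₀ : ℕ))) * (q * √P))
      ≤ 7 * (34 * (J₀ + 2) * √(J₀ + 2) * (q * √P)) := by
        gcongr
        · norm_num
        · exact log_four_mul_two_pow_le J₀
    _ = δ / 2 * √((476 * q / δ) ^ 2 * ((J₀ + 2) ^ 3 * P)) := by
        rw [sqrt_mul (by positivity), sqrt_sq (by positivity), sqrt_mul (by positivity), pow_succ,
          sqrt_mul (by positivity), sqrt_sq (by positivity)]
        field_simp
        ring
    _ ≤ δ / 2 * √(2 ^ J) := by gcongr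

theorem HasPowerGrowth.exists_sample_sizes (hΦ : HasPowerGrowth Φ p q) (hδ : 0 < δ) (hδ₁ : δ ≤ 1) :
    ∃ C, 0 < C ∧ ∀ K, 1 ≤ K → ∃ J₀ J : ℕ,
      300 * (2 * q * Φ (supBound Φ p K) * K) ^ 4 / δ ^ 3 ≤ 2 ^ J₀ ∧
      7 * (34 * (J₀ + 1) * √(log (4 * (2 ^ J₀ : ℕ))) * (q * √(Φ (supBound Φ p K)))) / √(2 ^ J)
        ≤ δ / 2 ∧
      2 ^ J ≤ C * Φ (K ^ (1 / p)) * logb 2 (2 * K) ^ 3 := by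
  obtain ⟨c, hc, hcoarse⟩ := hΦ.exists_coarse_sample_size hδ hδ₁
  have hq := hΦ.one_le_upper
  have hΦ₁ := hΦ.pos one_pos
  refine ⟨2 * ((476 * q / δ) ^ 2 * (c ^ 3 * ((1 + 1 / Φ 1) ^ (1 / p)) ^ q)), by positivity,
    fun K hK => ?_⟩
  obtain ⟨J₀, hJ₀, hJ₀log⟩ := hcoarse K hK
  obtain ⟨J, hJ, hJ'⟩ :=
    exists_thinned_sample_size hq hδ hδ₁ (hΦ.one_le_comp_supBound hK) J₀
  have := hΦ.one_le_comp_supBound hK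
  have hlog : 0 ≤ logb 2 (2 * K) := logb_nonneg one_lt_two (by linarith)
  refine ⟨J₀, J, hJ₀, hJ, hJ'.trans ?_⟩
  calc 2 * ((476 * q / δ) ^ 2 * ((J₀ + 2) ^ 3 * Φ (supBound Φ p K)))
      ≤ 2 * ((476 * q / δ) ^ 2 * ((c * logb 2 (2 * K)) ^ 3 *
          (((1 + 1 / Φ 1) ^ (1 / p)) ^ q * Φ (K ^ (1 / p))))) := by
        gcongr
        exact hΦ.comp_supBound_le hK
    _ = _ := by ring

variable {Ω E : Type*} [MeasurableSpace Ω] [NormedAddCommGroup E] [InnerProductSpace ℝ E]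
  [FiniteDimensional ℝ E] [Nontrivial E] {μ : Measure Ω} [IsProbabilityMeasure μ] {u : Ω → E}

theorem IsParsevalFrame.exists_sample (hu : IsParsevalFrame μ u K) (hΦ : HasPowerGrowth Φ p q)
    (hp : p ≤ 2) (hδ : 0 < δ) (hδ₁ : δ ≤ 1) {J₀ J : ℕ}
    (hJ₀ : 300 * (2 * q * Φ (supBound Φ p K) * K) ^ 4 / δ ^ 3 ≤ 2 ^ J₀)
    (hJ : 7 * (34 * (J₀ + 1) * √(log (4 * (2 ^ J₀ : ℕ))) * (q * √(Φ (supBound Φ p K)))) / √(2 ^ J)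
      ≤ δ / 2) :
    ∃ m ≤ 2 ^ J, ∃ x : Fin m → Ω, ∀ c ∈ modularBall μ u Φ,
      |𝔼 i, Φ |⟪u (x i), c⟫| - ∫ y, Φ |⟪u y, c⟫| ∂μ| ≤ δ := by
  have hK := hu.one_le
  have hq := hΦ.one_le_upper
  have hP := hΦ.one_le_comp_supBound hK
  have hqP : 1 ≤ q * Φ (supBound Φ p K) := one_le_mul_of_one_le_of_one_le hq hP
  obtain ⟨x, hx⟩ := hu.exists_isCoarseSample (ι := Fin (2 ^ J₀)) hΦ hp
    (A := 2 * q * Φ (supBound Φ p K) * K) (by nlinarith) (by nlinarith) hδ hδ₁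
    (by simpa using hJ₀)
  rcases le_or_gt J J₀ with hJJ₀ | hJJ₀
  · exact ⟨2 ^ J, le_rfl, hx.exists_thinning hu (one_pos.trans_le hK) hΦ hp hδ₁ hJJ₀ hJ⟩
  · exact ⟨2 ^ J₀, Nat.pow_le_pow_right two_pos hJJ₀.le, x, fun c hc =>
      (hx.abs_sub_le c hc).trans (by linarith)⟩

end SampleSize

/-! ### Comparison of Luxemburg functionals -/

section Luxemburg

/-- The threshold at which a decreasing function `G` on `(0, ∞)` reaches the value `1`. For the
modular `G a = ∫ Φ(|f| / a)` this is the Luxemburg functional of `f`, so that `luxNorm` and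
`discLuxNorm` are both of this form. -/
noncomputable def luxRadius (G : ℝ → ℝ) : ℝ :=
  sInf {a | 0 < a ∧ G a ≤ 1}

variable {G H : ℝ → ℝ} {a q δ : ℝ}

theorem luxRadius_le (ha : 0 < a) (hGa : G a ≤ 1) : luxRadius G ≤ a :=
  csInf_le ⟨0, fun _ hb => hb.1.le⟩ ⟨ha, hGa⟩

theorem apply_luxRadius_eq_one (hG : ∀ {a l}, 0 < a → 1 ≤ l → G (a * l) ≤ G a / l)
    (hG' : ∀ {a l}, 0 < a → 1 ≤ l → G a ≤ l ^ q * G (a * l)) (hr : 0 < luxRadius G) :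
    G (luxRadius G) = 1 := by
  set r := luxRadius G with hr_def
  have hlim : Filter.Tendsto (fun l : ℝ => l ^ q) (nhdsWithin 1 (Set.Ioi 1)) (nhds 1) := by
    have : ContinuousAt (fun l : ℝ => l ^ q) 1 := continuousAt_rpow_const _ _ (.inl one_ne_zero)
    simpa using this.tendsto.mono_left nhdsWithin_le_nhds
  have hne : {a | 0 < a ∧ G a ≤ 1}.Nonempty := by
    by_contra hempty
    rw [Set.not_nonempty_iff_eq_empty] at hempty
    simp [hr_def, luxRadius, hempty] at hr
  apply le_antisymm
  · refine ge_of_tendsto hlim (eventually_mem_nhdsWithin.mono fun l hl => ?_)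
    have hl : 1 < l := hl
    obtain ⟨a, ⟨ha, hGa⟩, har⟩ := exists_lt_of_csInf_lt hne (lt_mul_of_one_lt_right hr hl)
    have h_one_le : 1 ≤ r * l / a := (one_le_div ha).2 har.le
    have hGl : G (r * l) ≤ 1 := by
      have := hG ha h_one_le
      rw [mul_div_cancel₀ _ ha.ne'] at this
      exact this.trans (div_le_one_of_le₀ (hGa.trans h_one_le) (one_pos.trans_le h_one_le).le)
    exact (hG' hr hl.le).trans (mul_le_of_le_one_right (by positivity) hGl)
  · have hlim' : Filter.Tendsto (fun l : ℝ => l ^ q * G r) (nhdsWithin 1 (Set.Ioi 1))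
        (nhds (G r)) := by
      simpa using hlim.mul_const (G r)
    refine ge_of_tendsto hlim' (eventually_mem_nhdsWithin.mono fun l hl => ?_)
    have hl : 1 < l := hl
    have hl₀ := one_pos.trans hl
    have hGl : 1 < G (r / l) := by
      by_contra! hle
      exact (div_lt_self hr hl).not_ge (luxRadius_le (div_pos hr hl₀) hle)
    have := hG' (div_pos hr hl₀) hl.le
    rw [div_mul_cancel₀ _ hl₀.ne'] at this
    exact hGl.le.trans this

theorem luxRadius_le_one_add_mul (hG : G a = 1) (hH : ∀ {a l}, 0 < a → 1 ≤ l → H (a * l) ≤ H a / l)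
    (ha : 0 < a) (hδ : 0 ≤ δ) (hGH : |H a - G a| ≤ δ) : luxRadius H ≤ (1 + δ) * a := by
  have hHa := (abs_le.1 hGH).2
  rw [mul_comm]
  refine luxRadius_le (by positivity) ((hH ha (by linarith)).trans ?_)
  exact div_le_one_of_le₀ (by linarith) (by linarith)

theorem one_sub_mul_le_luxRadius (hG : G a = 1) (hH : ∀ {a l}, 0 < a → 1 ≤ l → H (a * l) ≤ H a / l)
    (ha : 0 < a) (hδ : 0 ≤ δ) (hGH : |H a - G a| ≤ δ) : (1 - δ) * a ≤ luxRadius H := by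
  have hHa := (abs_le.1 hGH).1
  have hne : {b | 0 < b ∧ H b ≤ 1}.Nonempty := by
    refine ⟨a * (1 + δ), by positivity, (hH ha (by linarith)).trans ?_⟩
    exact div_le_one_of_le₀ (by linarith [(abs_le.1 hGH).2]) (by linarith)
  refine le_csInf hne fun b ⟨hb, hHb⟩ => ?_
  rcases le_total a b with hab | hba
  · nlinarith
  · have := hH hb ((one_le_div hb).2 hba)
    rw [mul_div_cancel₀ _ hb.ne'] at this
    have hba : H a ≤ b / a :=
      calc H a ≤ H b / (a / b) := this
        _ ≤ 1 / (a / b) := by gcongr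
        _ = b / a := one_div_div a b
    rw [← le_div_iff₀ ha]
    linarith

end Luxemburg

section LuxemburgOfFrame

theorem abs_inner_inv_smul {E : Type*} [NormedAddCommGroup E] [InnerProductSpace ℝ E] {a : ℝ}
    (ha : 0 < a) (v c : E) : |⟪v, a⁻¹ • c⟫| = |⟪v, c⟫| / a := by
  rw [real_inner_smul_right, abs_mul, abs_of_pos (inv_pos.2 ha), inv_mul_eq_div]

variable {Ω E : Type*} {Φ : ℝ → ℝ} {p q K δ a l : ℝ}

theorem luxNorm_zero [MeasurableSpace Ω] (μ : Measure Ω) (hΦ : Φ 0 = 0) :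
    luxNorm μ Φ (fun _ => 0) = 0 := by
  simp only [luxNorm, abs_zero, zero_div, hΦ, integral_zero, zero_le_one, and_true]
  exact csInf_Ioi

theorem discLuxNorm_zero {m : ℕ} (x : Fin m → Ω) (hΦ : Φ 0 = 0) :
    discLuxNorm Φ x (fun _ => 0) = 0 := by
  simp only [discLuxNorm, abs_zero, zero_div, hΦ, Finset.sum_const_zero, zero_le_one, and_true]
  exact csInf_Ioi

theorem HasPowerGrowth.sum_comp_div_mul_le (hΦ : HasPowerGrowth Φ p q) {m : ℕ} (x : Fin m → Ω)
    (f : Ω → ℝ) (ha : 0 < a) (hl : 1 ≤ l) :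
    (∑ j, Φ (|f (x j)| / (a * l))) / m ≤ (∑ j, Φ (|f (x j)| / a)) / m / l := by
  rw [div_right_comm _ (m : ℝ) l]
  refine div_le_div_of_nonneg_right ?_ m.cast_nonneg
  rw [Finset.sum_div]
  refine Finset.sum_le_sum fun j _ => ?_
  rw [← div_div]
  exact hΦ.comp_div_le (by positivity) hl

variable [MeasurableSpace Ω] [NormedAddCommGroup E] [InnerProductSpace ℝ E] {μ : Measure Ω}
  [IsProbabilityMeasure μ] {u : Ω → E} {c : E}

namespace IsParsevalFrame

theorem integrable_comp_div (hu : IsParsevalFrame μ u K) (hΦ : HasPowerGrowth Φ p q) (c : E)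
    (ha : 0 < a) : Integrable (fun y => Φ (|⟪u y, c⟫| / a)) μ := by
  simpa only [abs_inner_inv_smul ha] using hu.integrable_comp hΦ (a⁻¹ • c)

theorem integral_comp_div_mul_le (hu : IsParsevalFrame μ u K) (hΦ : HasPowerGrowth Φ p q) (c : E)
    (ha : 0 < a) (hl : 1 ≤ l) :
    ∫ y, Φ (|⟪u y, c⟫| / (a * l)) ∂μ ≤ (∫ y, Φ (|⟪u y, c⟫| / a) ∂μ) / l := by
  rw [← integral_div]
  refine integral_mono (hu.integrable_comp_div hΦ c (by positivity))
    ((hu.integrable_comp_div hΦ c ha).div_const l) fun y => ?_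
  simp only [← div_div]
  exact hΦ.comp_div_le (by positivity) hl

theorem integral_comp_div_le_rpow_mul (hu : IsParsevalFrame μ u K) (hΦ : HasPowerGrowth Φ p q)
    (c : E) (ha : 0 < a) (hl : 1 ≤ l) :
    ∫ y, Φ (|⟪u y, c⟫| / a) ∂μ ≤ l ^ q * ∫ y, Φ (|⟪u y, c⟫| / (a * l)) ∂μ := by
  rw [← integral_const_mul]
  refine integral_mono (hu.integrable_comp_div hΦ c ha)
    ((hu.integrable_comp_div hΦ c (by positivity)).const_mul _) fun y => ?_
  simp only [← div_div]
  exact hΦ.le_rpow_mul_comp_div (by positivity) hl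

theorem luxNorm_pos (hu : IsParsevalFrame μ u K) (hΦ : HasPowerGrowth Φ p q) (hp : p ≤ 2)
    (hK : 0 < K) (hc : c ≠ 0) : 0 < luxNorm μ Φ fun y => ⟪u y, c⟫ := by
  have hM := hΦ.supBound_pos hK
  have hI : 0 ≤ ∫ y, Φ (|⟪u y, c⟫| / 1) ∂μ :=
    integral_nonneg fun y => hΦ.nonneg (by positivity)
  set I := ∫ y, Φ (|⟪u y, c⟫| / 1) ∂μ
  have hne : {a | 0 < a ∧ ∫ y, Φ (|⟪u y, c⟫| / a) ∂μ ≤ 1}.Nonempty := by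
    refine ⟨1 * (1 + I), by positivity,
      (hu.integral_comp_div_mul_le hΦ c one_pos (by linarith)).trans ?_⟩
    exact div_le_one_of_le₀ (by linarith) (by linarith)
  have hlower : √K * ‖c‖ / supBound Φ p K ≤ luxNorm μ Φ fun y => ⟪u y, c⟫ := by
    refine le_csInf hne fun a ⟨ha, hIa⟩ => ?_
    have hmem : a⁻¹ • c ∈ modularBall μ u Φ := by
      simpa only [modularBall, Set.mem_ofPred_eq, abs_inner_inv_smul ha] using hIa
    have := hu.sqrt_mul_norm_le_supBound hΦ hp hK hmem
    rw [norm_smul, norm_of_nonneg (inv_pos.2 ha).le, mul_left_comm, inv_mul_le_iff₀ ha] at this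
    rwa [div_le_iff₀ hM]
  have := norm_pos_iff.2 hc
  exact hlower.trans_lt' (by positivity)

/-- At the radius `a = ‖f‖_Φ` the modular of `f / a` equals `1`, so discretizing the modular on the
modular ball discretizes the Luxemburg functional. -/
theorem luxNorm_comparison (hu : IsParsevalFrame μ u K) (hΦ : HasPowerGrowth Φ p q) (hp : p ≤ 2)
    (hK : 0 < K) (hδ : 0 ≤ δ) {m : ℕ} {x : Fin m → Ω}
    (hx : ∀ c ∈ modularBall μ u Φ, |𝔼 i, Φ |⟪u (x i), c⟫| - ∫ y, Φ |⟪u y, c⟫| ∂μ| ≤ δ) (c : E) :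
    (1 - δ) * luxNorm μ Φ (fun y => ⟪u y, c⟫) ≤ discLuxNorm Φ x (fun y => ⟪u y, c⟫) ∧
      discLuxNorm Φ x (fun y => ⟪u y, c⟫) ≤ (1 + δ) * luxNorm μ Φ (fun y => ⟪u y, c⟫) := by
  rcases eq_or_ne c 0 with rfl | hc
  · simp only [inner_zero_right, luxNorm_zero μ hΦ.map_zero, discLuxNorm_zero x hΦ.map_zero,
      mul_zero, le_rfl, and_self]
  set a := luxNorm μ Φ fun y => ⟪u y, c⟫
  have ha : 0 < a := hu.luxNorm_pos hΦ hp hK hc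
  have hG : ∫ y, Φ (|⟪u y, c⟫| / a) ∂μ = 1 :=
    apply_luxRadius_eq_one (G := fun a => ∫ y, Φ (|⟪u y, c⟫| / a) ∂μ)
      (hu.integral_comp_div_mul_le hΦ c) (hu.integral_comp_div_le_rpow_mul hΦ c) ha
  have hGH : |(∑ j, Φ (|⟪u (x j), c⟫| / a)) / m - ∫ y, Φ (|⟪u y, c⟫| / a) ∂μ| ≤ δ := by
    have hmem : a⁻¹ • c ∈ modularBall μ u Φ := by
      simpa only [modularBall, Set.mem_ofPred_eq, abs_inner_inv_smul ha] using hG.le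
    simpa only [abs_inner_inv_smul ha, Fintype.expect_eq_sum_div_card, Fintype.card_fin]
      using hx _ hmem
  have hH {a l} := hΦ.sum_comp_div_mul_le (a := a) (l := l) x fun y => ⟪u y, c⟫
  exact ⟨one_sub_mul_le_luxRadius (G := fun a => ∫ y, Φ (|⟪u y, c⟫| / a) ∂μ) hG hH ha hδ hGH,
    luxRadius_le_one_add_mul (G := fun a => ∫ y, Φ (|⟪u y, c⟫| / a) ∂μ) hG hH ha hδ hGH⟩

end IsParsevalFrame

end LuxemburgOfFrame

/-! ### Frames of subspaces -/

section FrameOfSubmodule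

open Module

variable {Ω : Type*} [MeasurableSpace Ω] {μ : Measure Ω} {X : Submodule ℝ (Ω → ℝ)}
  [FiniteDimensional ℝ X]

theorem exists_linearEquiv_integral_sq_eq_norm_sq
    (hint : ∀ f g : X, Integrable (fun y => f.1 y * g.1 y) μ)
    (hdef : ∀ f : X, ∫ y, f.1 y ^ 2 ∂μ = 0 → f = 0) :
    ∃ L : EuclideanSpace ℝ (Fin (finrank ℝ X)) ≃ₗ[ℝ] X,
      ∀ c, ∫ y, (L c).1 y ^ 2 ∂μ = ‖c‖ ^ 2 := by
  let core : InnerProductSpace.Core ℝ X :=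
    { inner := fun f g => ∫ y, f.1 y * g.1 y ∂μ
      conj_inner_symm := fun f g => by simp only [mul_comm, conj_trivial]
      re_inner_nonneg := fun f => integral_nonneg fun y => mul_self_nonneg _
      add_left := fun f g h => by
        simp only [Submodule.coe_add, Pi.add_apply, add_mul]
        exact integral_add (hint f h) (hint g h)
      smul_left := fun f g r => by
        simp only [Submodule.coe_smul, Pi.smul_apply, smul_eq_mul, mul_assoc, conj_trivial]
        exact integral_const_mul r _
      definite := fun f hf => hdef f (by simpa only [sq] using hf) }
  let : NormedAddCommGroup X := core.toNormedAddCommGroup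
  let : InnerProductSpace ℝ X := InnerProductSpace.ofCore core.toCore
  let b := stdOrthonormalBasis ℝ X
  refine ⟨b.repr.symm.toLinearEquiv, fun c => ?_⟩
  calc ∫ y, (b.repr.symm c).1 y ^ 2 ∂μ = ⟪b.repr.symm c, b.repr.symm c⟫ := by simp only [sq]; rfl
    _ = ‖c‖ ^ 2 := by rw [real_inner_self_eq_norm_sq, LinearIsometryEquiv.norm_map]

theorem exists_isParsevalFrame [IsProbabilityMeasure μ] {K : ℝ} (hK : 0 ≤ K)
    (hmeas : ∀ f ∈ X, Measurable f) (hsup : ∀ f ∈ X, ∀ y, f y ^ 2 ≤ K * ∫ z, f z ^ 2 ∂μ) :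
    ∃ u : Ω → EuclideanSpace ℝ (Fin (finrank ℝ X)), IsParsevalFrame μ u K ∧
      ∀ f ∈ X, ∃ c, f = fun y => ⟪u y, c⟫ := by
  have hLp (f : X) : MemLp f.1 2 μ :=
    MemLp.of_bound (hmeas f f.2).aestronglyMeasurable (√(K * ∫ z, f.1 z ^ 2 ∂μ))
      (Filter.Eventually.of_forall fun y => abs_le_sqrt (hsup f f.2 y))
  have hdef (f : X) (hf : ∫ y, f.1 y ^ 2 ∂μ = 0) : f = 0 := by
    ext y
    have := hsup f f.2 y
    rw [hf, mul_zero] at this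
    exact pow_eq_zero_iff two_ne_zero |>.1 (this.antisymm (sq_nonneg _))
  obtain ⟨L, hL⟩ :=
    exists_linearEquiv_integral_sq_eq_norm_sq (fun f g => (hLp f).integrable_mul (hLp g)) hdef
  let u (y : Ω) := (InnerProductSpace.toDual ℝ _).symm
    (LinearMap.toContinuousLinearMap (LinearMap.proj y ∘ₗ X.subtype ∘ₗ L.toLinearMap))
  have hu (y c) : ⟪u y, c⟫ = (L c).1 y := InnerProductSpace.toDual_symm_apply
  refine ⟨u, ⟨fun c => ?_, fun c => ?_, fun y => ?_⟩, fun f hf => ⟨L.symm ⟨f, hf⟩, ?_⟩⟩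
  · simpa only [hu] using hmeas _ (L c).2
  · simpa only [hu] using hL c
  · have := hsup _ (L (u y)).2 y
    rw [hL, ← hu, real_inner_self_eq_norm_sq] at this
    rcases (sq_nonneg ‖u y‖).eq_or_lt with h₀ | h₀
    · rwa [← h₀]
    · exact le_of_mul_le_mul_right (by rwa [← sq]) h₀
  · simp only [hu, LinearEquiv.apply_symm_apply]

end FrameOfSubmodule

/-! ### The discretization theorem -/

theorem sq_le_of_supNorm_le {Ω : Type*} [TopologicalSpace Ω] [CompactSpace Ω] {f : Ω → ℝ}
    (hf : Continuous f) {a b : ℝ} (ha : 0 ≤ a) (hb : 0 ≤ b) (h : supNorm f ≤ √a * √b) (y : Ω) :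
    f y ^ 2 ≤ a * b :=
  calc f y ^ 2 = |f y| ^ 2 := (sq_abs _).symm
    _ ≤ (√a * √b) ^ 2 := by
        gcongr
        exact (le_ciSup (isCompact_range hf.abs).bddAbove y).trans h
    _ = a * b := by rw [mul_pow, sq_sqrt ha, sq_sqrt hb]

theorem statement0_general {p ε : ℝ} (hp : 1 ≤ p) (hε₀ : 0 < ε) (hε₁ : ε ≤ 1) {Φ : ℝ → ℝ}
    (hpre : IsPhiPrefun Φ) (hinc : IncP Φ p) (hdec : ∃ q, p ≤ q ∧ DecQ Φ q) :
    ∃ C, 0 < C ∧ ∀ (Ω : Type*) [MeasurableSpace Ω] (μ : Measure Ω) [IsProbabilityMeasure μ]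
      (K : ℝ) (X : Submodule ℝ (Ω → ℝ)) [FiniteDimensional ℝ X] [Nontrivial X],
      (∀ f ∈ X, Measurable f) → (∀ f ∈ X, ∀ y, f y ^ 2 ≤ K * ∫ z, f z ^ 2 ∂μ) →
      ∃ m : ℕ, m ≤ C * Φ (K ^ (1 / min p 2)) * logb 2 (2 * K) ^ 3 ∧
        ∃ x : Fin m → Ω, ∀ f ∈ X,
          (1 - ε) * luxNorm μ Φ f ≤ discLuxNorm Φ x f ∧
            discLuxNorm Φ x f ≤ (1 + ε) * luxNorm μ Φ f := by
  obtain ⟨q, hpq, hdec⟩ := hdec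
  have hΦ : HasPowerGrowth Φ (min p 2) q := (HasPowerGrowth.of_isPhiPrefun hp hpq hpre hinc
    hdec).of_lower_le (le_min hp one_le_two) (min_le_left p 2)
  obtain ⟨C, hC, hsizes⟩ := hΦ.exists_sample_sizes hε₀ hε₁
  refine ⟨C, hC, fun Ω _ μ _ K X _ _ hmeas hsup => ?_⟩
  have hK₀ : 0 ≤ K := by
    obtain ⟨f, hf⟩ := exists_ne (0 : X)
    obtain ⟨y, hy⟩ : ∃ y, f.1 y ≠ 0 := Function.ne_iff.1 (Subtype.coe_ne_coe.2 hf)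
    exact (pos_of_mul_pos_left ((sq_pos_of_ne_zero hy).trans_le (hsup f f.2 y))
      (integral_nonneg fun z => sq_nonneg _)).le
  obtain ⟨u, hu, hX⟩ := exists_isParsevalFrame hK₀ hmeas hsup
  have : Nontrivial (EuclideanSpace ℝ (Fin (Module.finrank ℝ X))) :=
    Module.nontrivial_of_finrank_pos (R := ℝ) (by simpa using Module.finrank_pos (R := ℝ) (M := X))
  have hK := hu.one_le
  obtain ⟨J₀, J, hJ₀, hJ, hcard⟩ := hsizes K hK
  obtain ⟨m, hm, x, hx⟩ := hu.exists_sample hΦ (min_le_right p 2) hε₀ hε₁ hJ₀ hJ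
  refine ⟨m, le_trans (by exact_mod_cast hm) hcard, x, fun f hf => ?_⟩
  obtain ⟨c, rfl⟩ := hX f hf
  exact hu.luxNorm_comparison hΦ (min_le_right p 2) (by positivity) hε₀.le hx c

/-- Theorem 1.1. Let `p ∈ [1,∞)`, `ε ∈ (0,1)`. Let `Φ` be a Φ-function with
`t ↦ Φ(t)t^{-p}` increasing on `(0,∞)` and `t ↦ Φ(t)t^{-q}` decreasing on `(0,∞)` for some
`q ∈ [p,∞)`. There is `C = C_{Φ,ε} > 0` such that: for every compact `Ω ⊂ ℝ^d` with a Borel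
probability measure `μ`, every `B ≥ 1` and every `N`-dimensional subspace `X_N ⊂ C(Ω)` with
`‖f‖_∞ ≤ √(BN) ‖f‖_{L²(μ)}` on `X_N`, there are `m ≤ C Φ((BN)^{1/min{p,2}}) (log₂ 2BN)³`
points `x₁, …, x_m ∈ Ω` with `(1−ε)‖f‖_Φ ≤ ‖f‖_{Φ,x} ≤ (1+ε)‖f‖_Φ` for all `f ∈ X_N`. -/
theorem statement0 (p : ℝ) (hp : 1 ≤ p) (ε : ℝ) (hε0 : 0 < ε) (hε1 : ε < 1)
    (Φ : ℝ → ℝ) (hpre : IsPhiPrefun Φ) (hphiw : ∃ a : ℝ, 1 ≤ a ∧ AIncP Φ 1 a)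
    (hinc : IncP Φ p) (hdec : ∃ q : ℝ, p ≤ q ∧ DecQ Φ q) :
    ∃ C : ℝ, 0 < C ∧
      ∀ (d : ℕ) (Ω : Set (Fin d → ℝ)), IsCompact Ω →
      ∀ (μ : Measure Ω), IsProbabilityMeasure μ →
      ∀ B : ℝ, 1 ≤ B → ∀ N : ℕ, 1 ≤ N →
      ∀ X : Submodule ℝ (Ω → ℝ),
        (∀ f ∈ X, Continuous f) →
        Module.finrank ℝ X = N →
        (∀ f ∈ X, supNorm f ≤ Real.sqrt (B * N) * Real.sqrt (∫ y, (f y) ^ 2 ∂μ)) →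
        ∃ m : ℕ,
          (m : ℝ) ≤ C * Φ ((B * N) ^ (1 / min p 2)) * (Real.logb 2 (2 * B * N)) ^ 3 ∧
          ∃ x : Fin m → Ω, ∀ f ∈ X,
            (1 - ε) * luxNorm μ Φ f ≤ discLuxNorm Φ x f ∧
            discLuxNorm Φ x f ≤ (1 + ε) * luxNorm μ Φ f := by
  obtain ⟨C, hC, h⟩ := statement0_general hp hε0 hε1.le hpre hinc hdec
  refine ⟨C, hC, fun d Ω hΩ μ hμ B hB N hN X hcont hfr hsup => ?_⟩
  have := isCompact_iff_compactSpace.1 hΩ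
  have hpos : 0 < Module.finrank ℝ X := by omega
  have := Module.finite_of_finrank_pos hpos
  have := Module.nontrivial_of_finrank_pos hpos
  rw [mul_assoc 2 B]
  exact h Ω μ (B * N) X (fun f hf => (hcont f hf).measurable) fun f hf y =>
    sq_le_of_supNorm_le (hcont f hf) (by positivity) (by positivity) (hsup f hf) y
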